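/- There is a ℂ-algebra isomorphism Φ from 𝒜 onto the spherical double affine Hecke algebra eH_{t,q}e determined on generators by Φ(P₁) = e(X₁+X₂)e, Φ(P₂) = e(X₁X₂)e, Φ(Q₁) = e(Y₁+Y₂)e, Φ(Q₂) = e(Y₁Y₂)e, and Φ(R) = e(t⁻²Y₁X₁ + Y₂X₂)e. -/

import Mathlib

noncomputable section

/-- Generators of the double affine Hecke algebra of type GL₂:
`T, T⁻¹, X₁, X₁⁻¹, X₂, X₂⁻¹, Y₁, Y₁⁻¹, Y₂, Y₂⁻¹`. -/
inductive DGen : Type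
  | T | Ti | X1 | X1i | X2 | X2i | Y1 | Y1i | Y2 | Y2i

abbrev FD : Type := FreeAlgebra ℂ DGen

def gD : DGen → FD := FreeAlgebra.ι ℂ

/-- The defining relations of the double affine Hecke algebra `H_{t,q}` of type GL₂. -/
inductive DRel (q t : ℂ) : FD → FD → Prop
  | TTi : DRel q t (gD .T * gD .Ti) 1
  | TiT : DRel q t (gD .Ti * gD .T) 1
  | X1X1i : DRel q t (gD .X1 * gD .X1i) 1
  | X1iX1 : DRel q t (gD .X1i * gD .X1) 1
  | X2X2i : DRel q t (gD .X2 * gD .X2i) 1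
  | X2iX2 : DRel q t (gD .X2i * gD .X2) 1
  | Y1Y1i : DRel q t (gD .Y1 * gD .Y1i) 1
  | Y1iY1 : DRel q t (gD .Y1i * gD .Y1) 1
  | Y2Y2i : DRel q t (gD .Y2 * gD .Y2i) 1
  | Y2iY2 : DRel q t (gD .Y2i * gD .Y2) 1
  | TX1T : DRel q t (gD .T * gD .X1 * gD .T) (gD .X2)
  | TiY1Ti : DRel q t (gD .Ti * gD .Y1 * gD .Ti) (gD .Y2)
  | Xcomm : DRel q t (gD .X1 * gD .X2) (gD .X2 * gD .X1)
  | Ycomm : DRel q t (gD .Y1 * gD .Y2) (gD .Y2 * gD .Y1)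
  | YXX : DRel q t (gD .Y1 * (gD .X1 * gD .X2)) ((q ^ 2) • (gD .X1 * gD .X2 * gD .Y1))
  | X1iY2 : DRel q t (gD .X1i * gD .Y2) (gD .Y2 * gD .X1i * gD .Ti * gD .Ti)
  | hecke : DRel q t ((gD .T + algebraMap ℂ FD t⁻¹) * (gD .T - algebraMap ℂ FD t)) 0

/-- The double affine Hecke algebra `H_{t,q}` of type GL₂. -/
abbrev DAHA (q t : ℂ) : Type := RingQuot (DRel q t)

variable (q t : ℂ)

def T : DAHA q t := RingQuot.mkAlgHom ℂ (DRel q t) (gD .T)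
def Ti : DAHA q t := RingQuot.mkAlgHom ℂ (DRel q t) (gD .Ti)
def X1 : DAHA q t := RingQuot.mkAlgHom ℂ (DRel q t) (gD .X1)
def X1i : DAHA q t := RingQuot.mkAlgHom ℂ (DRel q t) (gD .X1i)
def X2 : DAHA q t := RingQuot.mkAlgHom ℂ (DRel q t) (gD .X2)
def X2i : DAHA q t := RingQuot.mkAlgHom ℂ (DRel q t) (gD .X2i)
def Y1 : DAHA q t := RingQuot.mkAlgHom ℂ (DRel q t) (gD .Y1)
def Y1i : DAHA q t := RingQuot.mkAlgHom ℂ (DRel q t) (gD .Y1i)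
def Y2 : DAHA q t := RingQuot.mkAlgHom ℂ (DRel q t) (gD .Y2)
def Y2i : DAHA q t := RingQuot.mkAlgHom ℂ (DRel q t) (gD .Y2i)

/-- Generators of the algebra `𝒜`: `P₁, P₂, P₂⁻¹, Q₁, Q₂, Q₂⁻¹, R`. -/
inductive AGen : Type
  | P1 | P2 | P2i | Q1 | Q2 | Q2i | R

abbrev FA : Type := FreeAlgebra ℂ AGen

def gA : AGen → FA := FreeAlgebra.ι ℂ

/-- The defining relations of the algebra `𝒜`. -/
inductive ARel (q t : ℂ) : FA → FA → Prop
  | P2P2i : ARel q t (gA .P2 * gA .P2i) 1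
  | P2iP2 : ARel q t (gA .P2i * gA .P2) 1
  | Q2Q2i : ARel q t (gA .Q2 * gA .Q2i) 1
  | Q2iQ2 : ARel q t (gA .Q2i * gA .Q2) 1
  | P2P1 : ARel q t (gA .P2 * gA .P1) (gA .P1 * gA .P2)
  | Q2Q1 : ARel q t (gA .Q2 * gA .Q1) (gA .Q1 * gA .Q2)
  | P2Q2 : ARel q t (gA .P2 * gA .Q2) ((q⁻¹ ^ 4) • (gA .Q2 * gA .P2))
  | P2Q1 : ARel q t (gA .P2 * gA .Q1) ((q⁻¹ ^ 2) • (gA .Q1 * gA .P2))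
  | P1Q2 : ARel q t (gA .P1 * gA .Q2) ((q⁻¹ ^ 2) • (gA .Q2 * gA .P1))
  | P1Q1 : ARel q t (gA .P1 * gA .Q1)
      (gA .Q1 * gA .P1 + (q⁻¹ ^ 2 - 1) • gA .R)
  | P2R : ARel q t (gA .P2 * gA .R) ((q⁻¹ ^ 2) • (gA .R * gA .P2))
  | RQ2 : ARel q t (gA .R * gA .Q2) ((q⁻¹ ^ 2) • (gA .Q2 * gA .R))
  | P1R : ARel q t (gA .P1 * gA .R)
      ((q⁻¹ ^ 2) • (gA .R * gA .P1) + (1 - q⁻¹ ^ 2) • (gA .Q1 * gA .P2))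
  | RQ1 : ARel q t (gA .R * gA .Q1)
      ((q⁻¹ ^ 2) • (gA .Q1 * gA .R) + (1 - q⁻¹ ^ 2) • (gA .Q2 * gA .P1))
  | RR : ARel q t (gA .R * gA .R)
      (((1 + t ^ 2) * (q⁻¹ ^ 2 + t⁻¹ ^ 2)) • (gA .Q2 * gA .P2)
        - (q⁻¹ ^ 2) • (gA .Q2 * gA .P1 * gA .P1)
        - (q⁻¹ ^ 2) • (gA .Q1 * gA .Q1 * gA .P2)
        + (q⁻¹ ^ 2) • (gA .Q1 * gA .R * gA .P1))

/-- The algebra `𝒜`. -/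
abbrev AlgA (q t : ℂ) : Type := RingQuot (ARel q t)

variable (q t : ℂ)

def P1 : AlgA q t := RingQuot.mkAlgHom ℂ (ARel q t) (gA .P1)
def P2 : AlgA q t := RingQuot.mkAlgHom ℂ (ARel q t) (gA .P2)
def P2i : AlgA q t := RingQuot.mkAlgHom ℂ (ARel q t) (gA .P2i)
def Q1 : AlgA q t := RingQuot.mkAlgHom ℂ (ARel q t) (gA .Q1)
def Q2 : AlgA q t := RingQuot.mkAlgHom ℂ (ARel q t) (gA .Q2)
def Q2i : AlgA q t := RingQuot.mkAlgHom ℂ (ARel q t) (gA .Q2i)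
def R : AlgA q t := RingQuot.mkAlgHom ℂ (ARel q t) (gA .R)

/-- The symmetrizing idempotent `e = (1 + tT)/(1 + t²)` of the DAHA. -/
def eSym (q t : ℂ) : DAHA q t := ((1 + t ^ 2)⁻¹ : ℂ) • (1 + t • T q t)

/-!
An element of `H` commuting with `T` acts on the corner `eHe` by right multiplication by `e`. The
symmetric functions of the `Xᵢ` and of the `Yᵢ` commute with `T`, and so does the symmetrization of
`Y₁X₁`; in the corner they satisfy the relations of `𝒜`, which gives the homomorphism `Φ`.

Since `H` is spanned by products of a Laurent polynomial in the `Yᵢ`, a Laurent polynomial in the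
`Xᵢ` and one of `1, T`, and Laurent polynomials in two variables are generated by one variable over
the symmetric ones, symmetrization reduces `eHe` to the elements `ese` with `s ∈ {1, X₁, Y₁, Y₁X₁}`
over symmetric functions. Hence `Φ` is surjective.

For injectivity, `𝒜` is generated by `1` and `R` over the commuting operators of left multiplication
by `Q₁, Q₂` and right multiplication by `P₁, P₂`, up to inverting `w ↦ Q₂wP₂`. In representations of
`H` induced from generic joint eigenvalues `(a, b)` of `(Y₁, Y₂)`, matrix coefficients of `Φ` turn
these operators into the scalars `a + b`, `ab`, `u`, `v`. The coefficients of an element of the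
kernel are thus polynomials that vanish on a dense set of points.
-/

section Field

variable {K : Type*} [Field K] {t : K}

theorem one_add_sq_ne_zero (h : t ^ 2 ≠ -1) : 1 + t ^ 2 ≠ 0 :=
  fun h' ↦ h (eq_neg_of_add_eq_zero_right h')

theorem one_add_inv_sq_ne_zero (ht : t ≠ 0) (h : t ^ 2 ≠ -1) : 1 + t⁻¹ ^ 2 ≠ 0 := by
  have : 1 + t⁻¹ ^ 2 = t⁻¹ ^ 2 * (1 + t ^ 2) := by
    field_simp
    ring
  rw [this]
  exact mul_ne_zero (pow_ne_zero 2 (inv_ne_zero ht)) (one_add_sq_ne_zero h)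

end Field

theorem mul_mul_eq_of_mul_eq {M : Type*} [Semigroup M] {a b c : M} (h : a * b = c) (d : M) :
    a * (b * d) = c * d := by
  rw [← mul_assoc, h]

theorem commute_of_mul_eq_one {M : Type*} [Monoid M] {a b b' : M} (h : Commute a b)
    (hbb' : b * b' = 1) (hb'b : b' * b = 1) : Commute a b' :=
  h.units_inv_right (u := ⟨b, b', hbb', hb'b⟩)

section Straightening

open Algebra Submodule

variable {K A : Type*}

section Semiring

variable [CommSemiring K] [Semiring A] [Algebra K A]

theorem toSubmodule_adjoin_le_of_mul_mem {S : Set A} {N : Submodule K A} (one_mem : 1 ∈ N)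
    (mul_mem : ∀ s ∈ S, ∀ n ∈ N, s * n ∈ N) : (adjoin K S).toSubmodule ≤ N := by
  intro a ha
  suffices ∀ n ∈ N, a * n ∈ N by simpa only [mul_one] using this 1 one_mem
  refine adjoin_induction mul_mem (fun r n hn ↦ ?_) (fun x y _ _ hx hy n hn ↦ ?_)
    (fun x y _ _ hx hy n hn ↦ ?_) ha
  · rw [← Algebra.smul_def]
    exact N.smul_mem r hn
  · rw [add_mul]
    exact N.add_mem (hx n hn) (hy n hn)
  · rw [mul_assoc]
    exact hx _ (hy n hn)

theorem span_mul_adjoin_le {G S : Set A}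
    (h : ∀ g ∈ G, ∀ s ∈ S, g * s ∈ (adjoin K S).toSubmodule * span K G) :
    span K G * (adjoin K S).toSubmodule ≤ (adjoin K S).toSubmodule * span K G := by
  set 𝒮 := (adjoin K S).toSubmodule
  have one_le : 1 ≤ 𝒮 := Submodule.one_le.2 (adjoin K S).one_mem
  have span_mul_span_le : span K G * span K S ≤ 𝒮 * span K G := by
    rw [span_mul_span, span_le]
    rintro _ ⟨g, hg, s, hs, rfl⟩
    exact h g hg s hs
  suffices ∀ a ∈ adjoin K S, span K G * span K {a} ≤ 𝒮 * span K G from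
    Submodule.mul_le.2 fun g hg a ha ↦ this a ha (mul_mem_mul hg (mem_span_singleton_self a))
  intro a ha
  induction ha using adjoin_induction with
  | mem s hs =>
    exact (mul_le_mul' le_rfl (span_mono (Set.singleton_subset_iff.2 hs))).trans span_mul_span_le
  | algebraMap r =>
    calc span K G * span K {algebraMap K A r} ≤ span K G * 1 :=
          mul_le_mul' le_rfl (span_le.2 (Set.singleton_subset_iff.2 (algebraMap_mem r)))
      _ = 1 * span K G := by rw [mul_one, one_mul]
      _ ≤ 𝒮 * span K G := mul_le_mul' one_le le_rfl
  | add a b _ _ ha hb =>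
    refine Submodule.mul_le.2 fun g hg c hc ↦ ?_
    obtain ⟨r, rfl⟩ := mem_span_singleton.1 hc
    rw [smul_add, mul_add, mul_smul_comm, mul_smul_comm]
    exact add_mem (smul_mem _ r (ha (mul_mem_mul hg (mem_span_singleton_self a))))
      (smul_mem _ r (hb (mul_mem_mul hg (mem_span_singleton_self b))))
  | mul a b _ _ ha hb =>
    calc span K G * span K {a * b} = span K G * span K {a} * span K {b} := by
          rw [mul_assoc, span_mul_span K {a}, Set.singleton_mul_singleton]
      _ ≤ 𝒮 * span K G * span K {b} := mul_le_mul' ha le_rfl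
      _ ≤ 𝒮 * (𝒮 * span K G) := by rw [mul_assoc]; exact mul_le_mul' le_rfl hb
      _ = 𝒮 * span K G := by rw [← mul_assoc, (adjoin K S).isIdempotentElem_toSubmodule.eq]

theorem adjoin_mul_eq_top {G S : Set A} (hGS : adjoin K (G ∪ S) = ⊤) {N : Submodule K A}
    (one_mem : 1 ∈ N) (h : ∀ g ∈ G, ∀ s ∈ S, g * s ∈ (adjoin K S).toSubmodule * span K G)
    (hN : span K G * N ≤ (adjoin K S).toSubmodule * N) : (adjoin K S).toSubmodule * N = ⊤ := by
  set 𝒮 := (adjoin K S).toSubmodule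
  have hSS : 𝒮 * 𝒮 = 𝒮 := (adjoin K S).isIdempotentElem_toSubmodule.eq
  have hG : span K G * (𝒮 * N) ≤ 𝒮 * N := calc
    span K G * (𝒮 * N) ≤ 𝒮 * span K G * N := by
      rw [← mul_assoc]; exact mul_le_mul' (span_mul_adjoin_le h) le_rfl
    _ ≤ 𝒮 * (𝒮 * N) := by rw [mul_assoc]; exact mul_le_mul' le_rfl hN
    _ = 𝒮 * N := by rw [← mul_assoc, hSS]
  have hS : 𝒮 * (𝒮 * N) ≤ 𝒮 * N := by rw [← mul_assoc, hSS]
  have le : (adjoin K (G ∪ S)).toSubmodule ≤ 𝒮 * N := by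
    have one_mem' : (1 : A) ∈ 𝒮 * N := by
      simpa only [mul_one] using mul_mem_mul (adjoin K S).one_mem one_mem
    refine toSubmodule_adjoin_le_of_mul_mem one_mem' ?_
    rintro s (hs | hs) n hn
    · exact hG (mul_mem_mul (subset_span hs) hn)
    · exact hS (mul_mem_mul (subset_adjoin hs) hn)
  rwa [hGS, Algebra.top_toSubmodule, top_le_iff] at le

end Semiring

section Ring

variable [CommRing K] [Ring A] [Algebra K A]

-- The two roots of `s ^ 2 - (x + y) * s + x * y` are `x` and `y`.
theorem exists_eq_add_mul_of_mem_adjoin {x y d a : A} (hxy : Commute x y) (hdx : Commute d x)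
    (hdy : Commute d y) (ha : a ∈ adjoin K {x, y, d}) :
    ∃ b ∈ adjoin K {x + y, x * y, d}, ∃ c ∈ adjoin K {x + y, x * y, d}, a = b + c * x := by
  set 𝒮 := adjoin K {x + y, x * y, d}
  have sum_mem : x + y ∈ 𝒮 := subset_adjoin (by simp)
  have prod_mem : x * y ∈ 𝒮 := subset_adjoin (by simp)
  have hd : d ∈ 𝒮 := subset_adjoin (by simp)
  have x_comm : ∀ c ∈ 𝒮, Commute x c := fun c hc ↦ by
    refine commute_of_mem_adjoin_of_forall_mem_commute hc ?_
    rintro _ (rfl | rfl | rfl)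
    exacts [(Commute.refl x).add_right hxy, (Commute.refl x).mul_right hxy, hdx.symm]
  let N : Submodule K A := 𝒮.toSubmodule ⊔ 𝒮.toSubmodule.map (LinearMap.mulRight K x)
  have mem_N {b c : A} (hb : b ∈ 𝒮) (hc : c ∈ 𝒮) : b + c * x ∈ N :=
    add_mem_sup hb (mem_map_of_mem (f := LinearMap.mulRight K x) hc)
  have 𝒮_mul_mem {s n : A} (hs : s ∈ 𝒮) (hn : n ∈ N) : s * n ∈ N := by
    obtain ⟨b, hb, _, ⟨c, hc, rfl⟩, rfl⟩ := mem_sup.1 hn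
    rw [LinearMap.mulRight_apply, mul_add, ← mul_assoc]
    exact mem_N (mul_mem hs hb) (mul_mem hs hc)
  have x_mul_mem {n : A} (hn : n ∈ N) : x * n ∈ N := by
    obtain ⟨b, hb, _, ⟨c, hc, rfl⟩, rfl⟩ := mem_sup.1 hn
    have : x * (b + c * x) = -(c * (x * y)) + (b + c * (x + y)) * x := by
      rw [mul_add, ← mul_assoc, (x_comm b hb).eq, (x_comm c hc).eq, hxy.eq]
      noncomm_ring
    rw [LinearMap.mulRight_apply, this]
    exact mem_N (neg_mem (mul_mem hc prod_mem)) (add_mem hb (mul_mem hc sum_mem))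
  have one_mem : (1 : A) ∈ N := by simpa using mem_N 𝒮.one_mem 𝒮.zero_mem
  have le : (adjoin K {x, y, d}).toSubmodule ≤ N := by
    refine toSubmodule_adjoin_le_of_mul_mem one_mem ?_
    rintro s (rfl | rfl | rfl) n hn
    · exact x_mul_mem hn
    · rw [← add_sub_cancel_left x s, sub_mul]
      exact sub_mem (𝒮_mul_mem sum_mem hn) (x_mul_mem hn)
    · exact 𝒮_mul_mem hd hn
  obtain ⟨b, hb, _, ⟨c, hc, rfl⟩, rfl⟩ := mem_sup.1 (le ha)
  exact ⟨b, hb, c, hc, rfl⟩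

end Ring

section Field

variable [Field K] [Ring A] [Algebra K A] {c : K} {d d' x y : A}

theorem inv_mul_eq_smul_of_mul_eq_smul (hc : c ≠ 0) (hdd' : d * d' = 1) (hd'd : d' * d = 1)
    (h : d * y = c • (x * d)) : d' * x = c⁻¹ • (y * d') := by
  have : d' * (d * y) * d' = c • (d' * x) := by
    rw [h, mul_smul_comm, smul_mul_assoc, mul_assoc, mul_assoc x, hdd', mul_one]
  rw [← mul_assoc, hd'd, one_mul] at this
  rw [this, inv_smul_smul₀ hc]

theorem mul_inv_eq_smul_of_mul_eq_smul (hc : c ≠ 0) (hdd' : d * d' = 1) (hd'd : d' * d = 1)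
    (h : x * d = c • (d * y)) : y * d' = c⁻¹ • (d' * x) := by
  have : d' * (x * d) * d' = c • (y * d') := by
    rw [h, mul_smul_comm, smul_mul_assoc, ← mul_assoc d', hd'd, one_mul]
  rw [mul_assoc, mul_assoc, hdd', mul_one] at this
  rw [this, inv_smul_smul₀ hc]

end Field

section Commuting

variable [CommSemiring K] [Semiring A] [Algebra K A]

theorem exists_pow_mul_mem_adjoin {S : Set A} {d d' a : A} (hd : d ∈ adjoin K S)
    (hdd' : d * d' = 1) (hcomm : ∀ s ∈ insert d' S, Commute d s)
    (ha : a ∈ adjoin K (insert d' S)) : ∃ n : ℕ, d ^ n * a ∈ adjoin K S := by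
  induction ha using adjoin_induction with
  | mem s hs =>
    obtain rfl | hs := hs
    · exact ⟨1, by rw [pow_one, hdd']; exact one_mem _⟩
    · exact ⟨0, by rw [pow_zero, one_mul]; exact subset_adjoin hs⟩
  | algebraMap r => exact ⟨0, mul_mem (pow_mem hd 0) (algebraMap_mem _ r)⟩
  | add a b _ _ iha ihb =>
    obtain ⟨m, hm⟩ := iha
    obtain ⟨n, hn⟩ := ihb
    refine ⟨m + n, ?_⟩
    rw [mul_add, pow_add, mul_assoc (d ^ m) _ b, pow_mul_comm, mul_assoc (d ^ n)]
    exact add_mem (mul_mem (pow_mem hd n) hm) (mul_mem (pow_mem hd m) hn)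
  | mul a b ha _ iha ihb =>
    obtain ⟨m, hm⟩ := iha
    obtain ⟨n, hn⟩ := ihb
    have : d ^ (m + n) * (a * b) = d ^ m * a * (d ^ n * b) := by
      rw [pow_add, mul_assoc, mul_assoc, ← mul_assoc a,
        ((commute_of_mem_adjoin_of_forall_mem_commute ha hcomm).pow_left n).symm.eq, mul_assoc]
    exact ⟨m + n, this ▸ mul_mem hm hn⟩

open scoped IsMulCommutative in
theorem exists_mvPolynomial_algHom {ι : Type*} {x : ι → A}
    (hx : ∀ i j, Commute (x i) (x j)) :
    ∃ φ : MvPolynomial ι K →ₐ[K] A, (∀ i, φ (MvPolynomial.X i) = x i) ∧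
      φ.range = adjoin K (Set.range x) := by
  have : IsMulCommutative (adjoin K (Set.range x)) := isMulCommutative_adjoin K (by
    rintro _ ⟨i, rfl⟩ _ ⟨j, rfl⟩
    exact hx i j)
  let φ : MvPolynomial ι K →ₐ[K] A := (adjoin K (Set.range x)).val.comp
    (MvPolynomial.aeval fun i ↦ ⟨x i, subset_adjoin (Set.mem_range_self i)⟩)
  have φ_X (i : ι) : φ (MvPolynomial.X i) = x i := by simp [φ]
  refine ⟨φ, φ_X, le_antisymm ?_ (adjoin_le ?_)⟩
  · rintro _ ⟨p, rfl⟩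
    exact Subtype.property _
  · rintro _ ⟨i, rfl⟩
    exact ⟨_, φ_X i⟩

end Commuting

section Operators

variable [CommSemiring K] [Semiring A] [Algebra K A] {S : Set A}
  {𝒪 : Subalgebra K (Module.End K A)}

theorem mulLeft_mem_of_mem_adjoin (h : ∀ s ∈ S, LinearMap.mulLeft K s ∈ 𝒪) {a : A}
    (ha : a ∈ adjoin K S) : LinearMap.mulLeft K a ∈ 𝒪 :=
  (adjoin_le (S := 𝒪.comap (lmul K A)) h) ha

theorem mulRight_mem_of_mem_adjoin (h : ∀ s ∈ S, LinearMap.mulRight K s ∈ 𝒪) {a : A}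
    (ha : a ∈ adjoin K S) : LinearMap.mulRight K a ∈ 𝒪 := by
  induction ha using adjoin_induction with
  | mem s hs => exact h s hs
  | algebraMap r =>
    convert algebraMap_mem 𝒪 r using 1
    ext a
    rw [LinearMap.mulRight_apply, ← commutes, ← Algebra.smul_def, Module.algebraMap_end_apply]
  | add a b _ _ iha ihb =>
    convert add_mem iha ihb using 1
    exact LinearMap.ext fun x ↦ mul_add x a b
  | mul a b _ _ iha ihb => exact LinearMap.mulRight_mul K A a b ▸ mul_mem ihb iha

end Operators

section Eigenfunctional

variable {ι M N : Type*} [CommSemiring K] [AddCommMonoid M] [Module K M] [AddCommMonoid N]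
  [Module K N]

theorem map_mvPolynomial_apply {φ : MvPolynomial ι K →ₐ[K] Module.End K M} {L : M →ₗ[K] N}
    {c : ι → K} (h : ∀ i m, L (φ (MvPolynomial.X i) m) = c i • L m) (f : MvPolynomial ι K)
    (m : M) : L (φ f m) = MvPolynomial.eval c f • L m := by
  induction f using MvPolynomial.induction_on generalizing m with
  | C r =>
    rw [← MvPolynomial.algebraMap_eq, AlgHom.commutes, Module.algebraMap_end_apply, map_smul,
      MvPolynomial.algebraMap_eq, MvPolynomial.eval_C]
  | add f g hf hg => rw [map_add, LinearMap.add_apply, map_add, hf, hg, map_add, add_smul]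
  | mul_X f i hf =>
    rw [map_mul, Module.End.mul_apply, hf, h, smul_smul, map_mul, MvPolynomial.eval_X]

end Eigenfunctional

end Straightening

theorem adjoin_range_mkAlgHom_ι {K X : Type*} [CommSemiring K]
    (r : FreeAlgebra K X → FreeAlgebra K X → Prop) :
    Algebra.adjoin K (Set.range fun x ↦ RingQuot.mkAlgHom K r (FreeAlgebra.ι K x)) = ⊤ := by
  rw [← Function.comp_def, Set.range_comp, Algebra.adjoin_image,
    FreeAlgebra.adjoin_range_ι, Algebra.map_top, AlgHom.range_eq_top]
  exact RingQuot.mkAlgHom_surjective K r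

section Corner

variable {K A : Type*} [CommSemiring K] [Semiring A] [Algebra K A] {e : A}

/-- The corner `eAe` of a `K`-algebra as a `K`-algebra with unit `e`. -/
instance cornerAlgebra (he : IsIdempotentElem e) : Algebra K he.Corner :=
  RingHom.toAlgebra'
    { toFun := fun r ↦ ⟨r • e, (Subsemigroup.mem_corner_iff he).2
        ⟨by rw [mul_smul_comm, he.eq], by rw [smul_mul_assoc, he.eq]⟩⟩
      map_one' := Subtype.ext (one_smul K e)
      map_mul' := fun r s ↦ Subtype.ext (by
        change (r * s) • e = r • e * s • e
        rw [smul_mul_smul_comm, he.eq])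
      map_zero' := Subtype.ext (zero_smul K e)
      map_add' := fun r s ↦ Subtype.ext (add_smul r s e) }
    (fun r x ↦ Subtype.ext (by
      obtain ⟨hl, hr⟩ := (Subsemigroup.mem_corner_iff he).1 x.2
      change r • e * x.1 = x.1 * r • e
      rw [smul_mul_assoc, mul_smul_comm, hl, hr]))

variable (K) in
/-- Multiplication by `e`, as an algebra map from the centralizer of `e` to the corner `eAe`. -/
def centralizerToCorner (he : IsIdempotentElem e) :
    Subalgebra.centralizer K {e} →ₐ[K] he.Corner where
  toFun a := ⟨a.1 * e, (Subsemigroup.mem_corner_iff he).2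
    ⟨by rw [← mul_assoc, a.2 e rfl, mul_assoc, he.eq], by rw [mul_assoc, he.eq]⟩⟩
  map_one' := Subtype.ext (one_mul e)
  map_mul' a b := Subtype.ext (by
    change a.1 * b.1 * e = a.1 * e * (b.1 * e)
    rw [mul_assoc a.1 e, ← mul_assoc e, b.2 e rfl, mul_assoc b.1, he.eq, mul_assoc])
  map_zero' := Subtype.ext (zero_mul e)
  map_add' a b := Subtype.ext (add_mul a.1 b.1 e)
  commutes' r := Subtype.ext (Algebra.smul_def r e).symm

end Corner

namespace DAHA

variable {q t}

local notation "𝐓" => T q t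
local notation "𝐓⁻¹" => Ti q t
local notation "𝐗₁" => X1 q t
local notation "𝐗₁⁻¹" => X1i q t
local notation "𝐗₂" => X2 q t
local notation "𝐗₂⁻¹" => X2i q t
local notation "𝐘₁" => Y1 q t
local notation "𝐘₁⁻¹" => Y1i q t
local notation "𝐘₂" => Y2 q t
local notation "𝐘₂⁻¹" => Y2i q t
local notation "𝐞" => eSym q t

section Relations

theorem T_mul_Ti : 𝐓 * 𝐓⁻¹ = 1 := by
  simpa only [T, Ti, map_mul, map_one] using
    RingQuot.mkAlgHom_rel ℂ (DRel.TTi (q := q) (t := t))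

theorem Ti_mul_T : 𝐓⁻¹ * 𝐓 = 1 := by
  simpa only [Ti, T, map_mul, map_one] using
    RingQuot.mkAlgHom_rel ℂ (DRel.TiT (q := q) (t := t))

theorem X1_mul_X1i : 𝐗₁ * 𝐗₁⁻¹ = 1 := by
  simpa only [X1, X1i, map_mul, map_one] using
    RingQuot.mkAlgHom_rel ℂ (DRel.X1X1i (q := q) (t := t))

theorem X1i_mul_X1 : 𝐗₁⁻¹ * 𝐗₁ = 1 := by
  simpa only [X1i, X1, map_mul, map_one] using
    RingQuot.mkAlgHom_rel ℂ (DRel.X1iX1 (q := q) (t := t))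

theorem X2_mul_X2i : 𝐗₂ * 𝐗₂⁻¹ = 1 := by
  simpa only [X2, X2i, map_mul, map_one] using
    RingQuot.mkAlgHom_rel ℂ (DRel.X2X2i (q := q) (t := t))

theorem X2i_mul_X2 : 𝐗₂⁻¹ * 𝐗₂ = 1 := by
  simpa only [X2i, X2, map_mul, map_one] using
    RingQuot.mkAlgHom_rel ℂ (DRel.X2iX2 (q := q) (t := t))

theorem Y1_mul_Y1i : 𝐘₁ * 𝐘₁⁻¹ = 1 := by
  simpa only [Y1, Y1i, map_mul, map_one] using
    RingQuot.mkAlgHom_rel ℂ (DRel.Y1Y1i (q := q) (t := t))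

theorem Y1i_mul_Y1 : 𝐘₁⁻¹ * 𝐘₁ = 1 := by
  simpa only [Y1i, Y1, map_mul, map_one] using
    RingQuot.mkAlgHom_rel ℂ (DRel.Y1iY1 (q := q) (t := t))

theorem Y2_mul_Y2i : 𝐘₂ * 𝐘₂⁻¹ = 1 := by
  simpa only [Y2, Y2i, map_mul, map_one] using
    RingQuot.mkAlgHom_rel ℂ (DRel.Y2Y2i (q := q) (t := t))

theorem Y2i_mul_Y2 : 𝐘₂⁻¹ * 𝐘₂ = 1 := by
  simpa only [Y2i, Y2, map_mul, map_one] using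
    RingQuot.mkAlgHom_rel ℂ (DRel.Y2iY2 (q := q) (t := t))

theorem T_mul_X1_mul_T : 𝐓 * 𝐗₁ * 𝐓 = 𝐗₂ := by
  simpa only [T, X1, X2, map_mul] using
    RingQuot.mkAlgHom_rel ℂ (DRel.TX1T (q := q) (t := t))

theorem Ti_mul_Y1_mul_Ti : 𝐓⁻¹ * 𝐘₁ * 𝐓⁻¹ = 𝐘₂ := by
  simpa only [Ti, Y1, Y2, map_mul] using
    RingQuot.mkAlgHom_rel ℂ (DRel.TiY1Ti (q := q) (t := t))

theorem commute_X1_X2 : Commute 𝐗₁ 𝐗₂ := by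
  simpa only [commute_iff_eq, X1, X2, map_mul] using
    RingQuot.mkAlgHom_rel ℂ (DRel.Xcomm (q := q) (t := t))

theorem commute_Y1_Y2 : Commute 𝐘₁ 𝐘₂ := by
  simpa only [commute_iff_eq, Y1, Y2, map_mul] using
    RingQuot.mkAlgHom_rel ℂ (DRel.Ycomm (q := q) (t := t))

theorem Y1_mul_X1_mul_X2 : 𝐘₁ * (𝐗₁ * 𝐗₂) = q ^ 2 • (𝐗₁ * 𝐗₂ * 𝐘₁) := by
  simpa only [Y1, X1, X2, map_mul, map_smul] using
    RingQuot.mkAlgHom_rel ℂ (DRel.YXX (q := q) (t := t))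

theorem X1i_mul_Y2 : 𝐗₁⁻¹ * 𝐘₂ = 𝐘₂ * 𝐗₁⁻¹ * 𝐓⁻¹ * 𝐓⁻¹ := by
  simpa only [X1i, Y2, Ti, map_mul] using
    RingQuot.mkAlgHom_rel ℂ (DRel.X1iY2 (q := q) (t := t))

theorem T_mul_T (ht : t ≠ 0) : 𝐓 * 𝐓 = 1 + (t - t⁻¹) • 𝐓 := by
  have hecke : (𝐓 + t⁻¹ • 1) * (𝐓 - t • 1) = 0 := by
    simpa only [T, map_mul, map_add, map_sub, map_zero, map_smul, map_one,
      Algebra.algebraMap_eq_smul_one] using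
      RingQuot.mkAlgHom_rel ℂ (DRel.hecke (q := q) (t := t))
  rw [← sub_eq_zero, ← hecke]
  simp only [mul_sub, add_mul, smul_mul_assoc, mul_smul_comm, one_mul, mul_one]
  match_scalars <;> field_simp
  ring

theorem T_eq (ht : t ≠ 0) : 𝐓 = 𝐓⁻¹ + (t - t⁻¹) • 1 := by
  calc 𝐓 = 𝐓⁻¹ * (𝐓 * 𝐓) := by rw [← mul_assoc, Ti_mul_T, one_mul]
    _ = 𝐓⁻¹ + (t - t⁻¹) • 1 := by
      rw [T_mul_T ht, mul_add, mul_one, mul_smul_comm, Ti_mul_T]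

theorem Ti_eq (ht : t ≠ 0) : 𝐓⁻¹ = 𝐓 - (t - t⁻¹) • 1 :=
  eq_sub_of_add_eq (T_eq ht).symm

theorem commute_Ti_of_commute_T {a : DAHA q t} (h : Commute 𝐓 a) : Commute 𝐓⁻¹ a :=
  (commute_of_mul_eq_one h.symm T_mul_Ti Ti_mul_T).symm

theorem commute_T_X1_mul_X2 : Commute 𝐓 (𝐗₁ * 𝐗₂) := by
  calc 𝐓 * (𝐗₁ * 𝐗₂) = 𝐓 * 𝐗₁ * 𝐓 * 𝐗₁ * 𝐓 := by
        rw [← T_mul_X1_mul_T]; simp only [mul_assoc]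
    _ = 𝐗₁ * 𝐗₂ * 𝐓 := by rw [T_mul_X1_mul_T, commute_X1_X2.eq]

theorem commute_T_Y1_mul_Y2 : Commute 𝐓 (𝐘₁ * 𝐘₂) := by
  calc 𝐓 * (𝐘₁ * 𝐘₂) = 𝐓 * 𝐓⁻¹ * 𝐘₁ * 𝐓⁻¹ * 𝐘₁ := by
        rw [commute_Y1_Y2.eq, ← Ti_mul_Y1_mul_Ti]; simp only [mul_assoc]
    _ = 𝐘₁ * (𝐓⁻¹ * 𝐘₁ * 𝐓⁻¹) * 𝐓 := by
        simp only [T_mul_Ti, one_mul, mul_assoc, Ti_mul_T, mul_one]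
    _ = 𝐘₁ * 𝐘₂ * 𝐓 := by rw [Ti_mul_Y1_mul_Ti]

end Relations

variable (q t) in
/-- The element `π = T X₁`, which together with `T` and the `Yᵢ` generates the algebra and
which permutes the `Yᵢ` cyclically up to a power of `q`. -/
def pi : DAHA q t := 𝐓 * 𝐗₁

variable (q t) in
/-- The inverse of `π`. -/
def piInv : DAHA q t := 𝐗₁⁻¹ * 𝐓⁻¹

local notation "𝛑" => pi q t
local notation "𝛑⁻¹" => piInv q t

section Pi

theorem pi_mul_piInv : 𝛑 * 𝛑⁻¹ = 1 := by
  rw [pi, piInv, mul_assoc, ← mul_assoc 𝐗₁, X1_mul_X1i, one_mul, T_mul_Ti]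

theorem piInv_mul_pi : 𝛑⁻¹ * 𝛑 = 1 := by
  rw [pi, piInv, mul_assoc, ← mul_assoc 𝐓⁻¹, Ti_mul_T, one_mul, X1i_mul_X1]

theorem X1_eq : 𝐗₁ = 𝐓⁻¹ * 𝛑 := by rw [pi, ← mul_assoc, Ti_mul_T, one_mul]

theorem X2_eq : 𝐗₂ = 𝛑 * 𝐓 := T_mul_X1_mul_T.symm

theorem X1i_eq : 𝐗₁⁻¹ = 𝛑⁻¹ * 𝐓 := by rw [piInv, mul_assoc, Ti_mul_T, mul_one]

theorem X2i_eq : 𝐗₂⁻¹ = 𝐓⁻¹ * 𝛑⁻¹ := by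
  refine left_inv_eq_right_inv X2i_mul_X2 ?_
  rw [X2_eq, mul_assoc, ← mul_assoc 𝐓, T_mul_Ti, one_mul, pi_mul_piInv]

theorem pi_mul_pi : 𝛑 * 𝛑 = 𝐗₁ * 𝐗₂ := by
  rw [pi, ← mul_assoc, T_mul_X1_mul_T, commute_X1_X2.eq]

theorem pi_mul_Y2 : 𝛑 * 𝐘₂ = 𝐘₁ * 𝛑 := by
  have X1_mul_Y2 : 𝐗₁ * 𝐘₂ = 𝐘₂ * 𝐓 * 𝐓 * 𝐗₁ := by
    calc 𝐗₁ * 𝐘₂ = 𝐗₁ * (𝐘₂ * 𝐗₁⁻¹ * 𝐓⁻¹ * 𝐓⁻¹) * 𝐓 * 𝐓 * 𝐗₁ := by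
          simp only [mul_assoc, mul_mul_eq_of_mul_eq Ti_mul_T, one_mul, X1i_mul_X1, mul_one]
      _ = 𝐘₂ * 𝐓 * 𝐓 * 𝐗₁ := by
          rw [← X1i_mul_Y2, ← mul_assoc 𝐗₁, X1_mul_X1i, one_mul]
  calc 𝛑 * 𝐘₂ = 𝐓 * 𝐘₂ * 𝐓 * 𝐓 * 𝐗₁ := by rw [pi, mul_assoc, X1_mul_Y2]; simp only [mul_assoc]
    _ = 𝐘₁ * 𝛑 := by
      rw [← Ti_mul_Y1_mul_Ti, pi]
      simp only [mul_assoc, mul_mul_eq_of_mul_eq Ti_mul_T, mul_mul_eq_of_mul_eq T_mul_Ti, one_mul]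

variable (hq : q ≠ 0)

include hq

theorem X1_mul_X2_mul_Y1 : 𝐗₁ * 𝐗₂ * 𝐘₁ = q⁻¹ ^ 2 • (𝐘₁ * (𝐗₁ * 𝐗₂)) := by
  rw [Y1_mul_X1_mul_X2, smul_smul, ← mul_pow, inv_mul_cancel₀ hq, one_pow, one_smul]

theorem pi_mul_Y1 : 𝛑 * 𝐘₁ = q⁻¹ ^ 2 • (𝐘₂ * 𝛑) := by
  have : 𝛑 * (𝛑 * 𝐘₁) = 𝛑 * q⁻¹ ^ 2 • (𝐘₂ * 𝛑) := by
    rw [← mul_assoc, pi_mul_pi, X1_mul_X2_mul_Y1 hq, ← pi_mul_pi, mul_smul_comm, ← mul_assoc,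
      ← mul_assoc, pi_mul_Y2]
  simpa only [mul_mul_eq_of_mul_eq piInv_mul_pi, one_mul] using congrArg (𝛑⁻¹ * ·) this

end Pi

section Straightening

theorem Ti_mul_Y1 : 𝐓⁻¹ * 𝐘₁ = 𝐘₂ * 𝐓 := by
  rw [← Ti_mul_Y1_mul_Ti, mul_assoc _ 𝐓⁻¹, Ti_mul_T, mul_one]

theorem T_mul_Y2 : 𝐓 * 𝐘₂ = 𝐘₁ * 𝐓⁻¹ := by
  rw [← Ti_mul_Y1_mul_Ti, ← mul_assoc, ← mul_assoc, T_mul_Ti, one_mul]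

theorem T_mul_X1 : 𝐓 * 𝐗₁ = 𝐗₂ * 𝐓⁻¹ := by
  rw [← T_mul_X1_mul_T, mul_assoc _ 𝐓, T_mul_Ti, mul_one]

theorem Ti_mul_X2 : 𝐓⁻¹ * 𝐗₂ = 𝐗₁ * 𝐓 := by
  rw [← T_mul_X1_mul_T, ← mul_assoc, ← mul_assoc, Ti_mul_T, one_mul]

theorem T_mul_Y1 (ht : t ≠ 0) : 𝐓 * 𝐘₁ = 𝐘₂ * 𝐓 + (t - t⁻¹) • 𝐘₁ := by
  rw [T_eq ht, add_mul, Ti_mul_Y1, smul_one_mul, ← T_eq ht]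

theorem Ti_mul_Y2 (ht : t ≠ 0) : 𝐓⁻¹ * 𝐘₂ = 𝐘₁ * 𝐓⁻¹ - (t - t⁻¹) • 𝐘₂ := by
  rw [Ti_eq ht, sub_mul, T_mul_Y2, smul_one_mul, ← Ti_eq ht]

theorem Ti_mul_X1 (ht : t ≠ 0) : 𝐓⁻¹ * 𝐗₁ = 𝐗₂ * 𝐓⁻¹ - (t - t⁻¹) • 𝐗₁ := by
  rw [Ti_eq ht, sub_mul, T_mul_X1, smul_one_mul, ← Ti_eq ht]

theorem T_mul_X2 (ht : t ≠ 0) : 𝐓 * 𝐗₂ = 𝐗₁ * 𝐓 + (t - t⁻¹) • 𝐗₂ := by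
  rw [T_eq ht, add_mul, Ti_mul_X2, smul_one_mul, ← T_eq ht]

theorem X1_mul_Y2 (ht : t ≠ 0) : 𝐗₁ * 𝐘₂ = 𝐘₂ * 𝐗₁ + (t - t⁻¹) • (𝐘₂ * 𝛑) := by
  rw [X1_eq, mul_assoc, pi_mul_Y2, ← mul_assoc, Ti_mul_Y1, mul_assoc]
  nth_rw 1 [T_eq ht]
  rw [add_mul, mul_add, smul_one_mul, mul_smul_comm]

theorem X1_mul_Y1 (hq : q ≠ 0) (ht : t ≠ 0) :
    𝐗₁ * 𝐘₁ = q⁻¹ ^ 2 • (𝐘₁ * 𝐗₁ - (t - t⁻¹) • (𝐘₂ * 𝛑)) := by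
  rw [X1_eq, mul_assoc, pi_mul_Y1 hq, mul_smul_comm, ← mul_assoc, Ti_mul_Y2 ht, sub_mul,
    smul_mul_assoc, mul_assoc]

theorem X2_mul_Y1 (hq : q ≠ 0) (ht : t ≠ 0) :
    𝐗₂ * 𝐘₁ = 𝐘₁ * 𝐗₂ + ((t - t⁻¹) * q⁻¹ ^ 2) • (𝐘₂ * 𝛑) := by
  rw [X2_eq, mul_assoc, T_mul_Y1 ht, mul_add, ← mul_assoc, pi_mul_Y2, mul_smul_comm,
    pi_mul_Y1 hq, smul_smul, mul_assoc]

theorem X2_mul_Y2 (hq : q ≠ 0) (ht : t ≠ 0) :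
    𝐗₂ * 𝐘₂ = q⁻¹ ^ 2 • (𝐘₂ * 𝐗₂ - (t - t⁻¹) • (𝐘₂ * 𝛑)) := by
  rw [X2_eq, mul_assoc, T_mul_Y2, ← mul_assoc, pi_mul_Y1 hq, Ti_eq ht, mul_sub, mul_smul_comm,
    mul_one, smul_mul_assoc, mul_assoc, smul_sub, smul_comm]

variable (hq : q ≠ 0)
include hq

theorem X1_mul_X2_mul_Y2 : 𝐗₁ * 𝐗₂ * 𝐘₂ = q⁻¹ ^ 2 • (𝐘₂ * (𝐗₁ * 𝐗₂)) := by
  rw [← pi_mul_pi, mul_assoc, pi_mul_Y2, ← mul_assoc, pi_mul_Y1 hq, smul_mul_assoc, mul_assoc]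

theorem pi_mul_Y1_mul_Y2 : 𝛑 * (𝐘₁ * 𝐘₂) = q⁻¹ ^ 2 • (𝐘₁ * 𝐘₂ * 𝛑) := by
  rw [← mul_assoc, pi_mul_Y1 hq, smul_mul_assoc, mul_assoc, pi_mul_Y2, ← mul_assoc,
    commute_Y1_Y2.eq]

theorem X1_mul_Y1_mul_Y2 : 𝐗₁ * (𝐘₁ * 𝐘₂) = q⁻¹ ^ 2 • (𝐘₁ * 𝐘₂ * 𝐗₁) := by
  rw [X1_eq, mul_assoc, pi_mul_Y1_mul_Y2 hq, mul_smul_comm, ← mul_assoc,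
    (commute_Ti_of_commute_T commute_T_Y1_mul_Y2).eq, mul_assoc]

theorem X2_mul_Y1_mul_Y2 : 𝐗₂ * (𝐘₁ * 𝐘₂) = q⁻¹ ^ 2 • (𝐘₁ * 𝐘₂ * 𝐗₂) := by
  rw [X2_eq, mul_assoc, commute_T_Y1_mul_Y2.eq, ← mul_assoc, pi_mul_Y1_mul_Y2 hq,
    smul_mul_assoc, mul_assoc]

end Straightening

section Symmetrize

variable (q t) in
/-- The symmetrization `a ↦ a + T⁻¹ a T⁻¹`. Its values commute with `T`, and it is linear over
the centralizer of `T`, so that relations between symmetrized elements can be checked before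
symmetrizing. -/
def symmetrize : DAHA q t →ₗ[ℂ] DAHA q t :=
  LinearMap.id + LinearMap.mulLeftRight ℂ (𝐓⁻¹, 𝐓⁻¹)

theorem symmetrize_apply (a : DAHA q t) : symmetrize q t a = a + 𝐓⁻¹ * a * 𝐓⁻¹ := by
  simp [symmetrize]

theorem commute_T_symmetrize (ht : t ≠ 0) (a : DAHA q t) : Commute 𝐓 (symmetrize q t a) := by
  rw [commute_iff_eq, symmetrize_apply]
  calc 𝐓 * (a + 𝐓⁻¹ * a * 𝐓⁻¹) = 𝐓 * a + a * 𝐓⁻¹ := by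
        rw [mul_add, ← mul_assoc, ← mul_assoc, T_mul_Ti, one_mul]
    _ = a * 𝐓 + 𝐓⁻¹ * a := by
        simp only [T_eq ht, add_mul, mul_add, smul_one_mul, mul_smul_one]; abel
    _ = (a + 𝐓⁻¹ * a * 𝐓⁻¹) * 𝐓 := by
        rw [add_mul, mul_assoc _ 𝐓⁻¹, Ti_mul_T, mul_one]

theorem mul_symmetrize {s : DAHA q t} (hs : Commute 𝐓 s) (a : DAHA q t) :
    s * symmetrize q t a = symmetrize q t (s * a) := by
  rw [symmetrize_apply, symmetrize_apply, mul_add, ← mul_assoc 𝐓⁻¹ s,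
    (commute_Ti_of_commute_T hs).eq]
  simp only [mul_assoc]

theorem symmetrize_mul {s : DAHA q t} (hs : Commute 𝐓 s) (a : DAHA q t) :
    symmetrize q t a * s = symmetrize q t (a * s) := by
  rw [symmetrize_apply, symmetrize_apply, add_mul, mul_assoc _ 𝐓⁻¹ s,
    (commute_Ti_of_commute_T hs).eq]
  simp only [mul_assoc]

theorem symmetrize_Y1 : symmetrize q t 𝐘₁ = 𝐘₁ + 𝐘₂ := by
  rw [symmetrize_apply, Ti_mul_Y1_mul_Ti]

theorem symmetrize_T_mul_T_mul_X1 (ht : t ≠ 0) :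
    symmetrize q t (𝐓 * (𝐓 * 𝐗₁)) = 𝐗₁ + 𝐗₂ := by
  rw [symmetrize_apply, ← mul_assoc 𝐓⁻¹, Ti_mul_T, one_mul, ← T_mul_X1_mul_T, ← mul_assoc,
    T_mul_T ht, Ti_eq ht, mul_sub, add_mul, one_mul, smul_mul_assoc, mul_smul_one]
  abel

theorem commute_T_Y1_add_Y2 (ht : t ≠ 0) : Commute 𝐓 (𝐘₁ + 𝐘₂) :=
  symmetrize_Y1 (q := q) (t := t) ▸ commute_T_symmetrize ht _

theorem commute_T_X1_add_X2 (ht : t ≠ 0) : Commute 𝐓 (𝐗₁ + 𝐗₂) :=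
  symmetrize_T_mul_T_mul_X1 (q := q) ht ▸ commute_T_symmetrize ht _

variable (q t) in
/-- The symmetrization of `Y₁X₁`, which lifts the image of `R` in the spherical algebra to the
centralizer of `T`. -/
def symR : DAHA q t := symmetrize q t (𝐘₁ * 𝐗₁)

theorem commute_T_symR (ht : t ≠ 0) : Commute 𝐓 (symR q t) := commute_T_symmetrize ht _

theorem symR_eq : symR q t = 𝐘₁ * 𝐗₁ + 𝐘₂ * 𝐗₂ * 𝐓⁻¹ * 𝐓⁻¹ := by
  rw [symR, symmetrize_apply, ← mul_assoc 𝐓⁻¹, Ti_mul_Y1, mul_assoc 𝐘₂ 𝐓, T_mul_X1,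
    ← mul_assoc 𝐘₂]

end Symmetrize

section SymmetricRelations

variable (hq : q ≠ 0)
include hq

theorem prodX_mul_prodY :
    𝐗₁ * 𝐗₂ * (𝐘₁ * 𝐘₂) = q⁻¹ ^ 4 • (𝐘₁ * 𝐘₂ * (𝐗₁ * 𝐗₂)) := by
  rw [← mul_assoc, X1_mul_X2_mul_Y1 hq, smul_mul_assoc, mul_assoc, X1_mul_X2_mul_Y2 hq,
    mul_smul_comm, smul_smul, ← pow_add, mul_assoc]

theorem prodX_mul_sumY :
    𝐗₁ * 𝐗₂ * (𝐘₁ + 𝐘₂) = q⁻¹ ^ 2 • ((𝐘₁ + 𝐘₂) * (𝐗₁ * 𝐗₂)) := by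
  rw [mul_add, X1_mul_X2_mul_Y1 hq, X1_mul_X2_mul_Y2 hq, add_mul, smul_add]

theorem sumX_mul_prodY :
    (𝐗₁ + 𝐗₂) * (𝐘₁ * 𝐘₂) = q⁻¹ ^ 2 • (𝐘₁ * 𝐘₂ * (𝐗₁ + 𝐗₂)) := by
  rw [add_mul, X1_mul_Y1_mul_Y2 hq, X2_mul_Y1_mul_Y2 hq, mul_add, smul_add]

theorem prodX_mul_symR : 𝐗₁ * 𝐗₂ * symR q t = q⁻¹ ^ 2 • (symR q t * (𝐗₁ * 𝐗₂)) := by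
  rw [symR, mul_symmetrize commute_T_X1_mul_X2, symmetrize_mul commute_T_X1_mul_X2, ← map_smul,
    ← mul_assoc, X1_mul_X2_mul_Y1 hq, smul_mul_assoc]
  simp only [mul_assoc, ← commute_X1_X2.eq]

theorem symR_mul_prodY : symR q t * (𝐘₁ * 𝐘₂) = q⁻¹ ^ 2 • (𝐘₁ * 𝐘₂ * symR q t) := by
  rw [symR, mul_symmetrize commute_T_Y1_mul_Y2, symmetrize_mul commute_T_Y1_mul_Y2, ← map_smul,
    mul_assoc, X1_mul_Y1_mul_Y2 hq, mul_smul_comm, ← mul_assoc 𝐘₁, ← mul_assoc 𝐘₁,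
    mul_assoc 𝐘₁ 𝐘₁, commute_Y1_Y2.eq, ← mul_assoc, ← commute_Y1_Y2.eq, mul_assoc (𝐘₁ * 𝐘₂)]

variable (ht : t ≠ 0)
include ht

theorem sumX_mul_Y1 : (𝐗₁ + 𝐗₂) * 𝐘₁ = 𝐘₁ * (q⁻¹ ^ 2 • 𝐗₁ + 𝐗₂) := by
  rw [add_mul, X1_mul_Y1 hq ht, X2_mul_Y1 hq ht, mul_add, mul_smul_comm]
  module

theorem sumX_mul_sumY :
    (𝐗₁ + 𝐗₂) * (𝐘₁ + 𝐘₂) = (𝐘₁ + 𝐘₂) * (𝐗₁ + 𝐗₂) + (q⁻¹ ^ 2 - 1) • symR q t := by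
  rw [← symmetrize_Y1, mul_symmetrize (commute_T_X1_add_X2 ht),
    symmetrize_mul (commute_T_X1_add_X2 ht), symR, ← map_smul, ← map_add, sumX_mul_Y1 hq ht]
  congr 1
  rw [mul_add, mul_add, mul_smul_comm]
  module

theorem sumX_mul_symR :
    (𝐗₁ + 𝐗₂) * symR q t =
      q⁻¹ ^ 2 • (symR q t * (𝐗₁ + 𝐗₂)) + (1 - q⁻¹ ^ 2) • ((𝐘₁ + 𝐘₂) * (𝐗₁ * 𝐗₂)) := by
  rw [← symmetrize_Y1, symR, mul_symmetrize (commute_T_X1_add_X2 ht),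
    symmetrize_mul (commute_T_X1_add_X2 ht), symmetrize_mul commute_T_X1_mul_X2, ← map_smul,
    ← map_smul, ← map_add, ← mul_assoc, sumX_mul_Y1 hq ht]
  congr 1
  simp only [mul_add, add_mul, mul_smul_comm, smul_mul_assoc, mul_assoc, commute_X1_X2.eq]
  module

theorem symR_mul_sumY :
    symR q t * (𝐘₁ + 𝐘₂) =
      q⁻¹ ^ 2 • ((𝐘₁ + 𝐘₂) * symR q t) + (1 - q⁻¹ ^ 2) • (𝐘₁ * 𝐘₂ * (𝐗₁ + 𝐗₂)) := by
  rw [← symmetrize_T_mul_T_mul_X1 ht, symR, mul_symmetrize (commute_T_Y1_add_Y2 ht),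
    symmetrize_mul (commute_T_Y1_add_Y2 ht), mul_symmetrize commute_T_Y1_mul_Y2, ← map_smul,
    ← map_smul, ← map_add]
  congr 1
  rw [mul_assoc, mul_add 𝐗₁, X1_mul_Y1 hq ht, X1_mul_Y2 ht, ← mul_assoc 𝐓, T_mul_T ht]
  simp only [pi, mul_add, add_mul, mul_sub, one_mul, mul_smul_comm, smul_mul_assoc, mul_assoc,
    mul_mul_eq_of_mul_eq commute_Y1_Y2.eq]
  module

end SymmetricRelations

section Idempotent

theorem T_mul_eSym (ht : t ≠ 0) : 𝐓 * 𝐞 = t • 𝐞 := by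
  rw [eSym, mul_smul_comm, smul_comm t, mul_add, mul_one, mul_smul_comm, T_mul_T ht]
  congr 1
  match_scalars <;> field_simp
  ring

theorem commute_T_eSym : Commute 𝐓 𝐞 :=
  (((Commute.one_right 𝐓).add_right ((Commute.refl 𝐓).smul_right t)).smul_right _)

theorem eSym_mul_T (ht : t ≠ 0) : 𝐞 * 𝐓 = t • 𝐞 := by
  rw [← commute_T_eSym.eq, T_mul_eSym ht]

theorem Ti_mul_eSym (ht : t ≠ 0) : 𝐓⁻¹ * 𝐞 = t⁻¹ • 𝐞 := by
  rw [Ti_eq ht, sub_mul, T_mul_eSym ht, smul_one_mul]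
  module

theorem eSym_mul_Ti (ht : t ≠ 0) : 𝐞 * 𝐓⁻¹ = t⁻¹ • 𝐞 := by
  rw [← (commute_Ti_of_commute_T commute_T_eSym).eq, Ti_mul_eSym ht]

theorem commute_eSym_of_commute_T {a : DAHA q t} (h : Commute 𝐓 a) : Commute 𝐞 a :=
  ((Commute.one_left a).add_left (h.smul_left t)).smul_left _

theorem isIdempotentElem_eSym (ht : t ≠ 0) (ht2 : t ^ 2 ≠ -1) : IsIdempotentElem 𝐞 := by
  have := one_add_sq_ne_zero ht2
  rw [IsIdempotentElem]
  nth_rw 1 [eSym]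
  rw [smul_mul_assoc, add_mul, one_mul, smul_mul_assoc, T_mul_eSym ht, smul_smul, ← sq]
  nth_rw 1 [← one_smul ℂ 𝐞]
  rw [← add_smul, smul_smul, inv_mul_cancel₀ this, one_smul]

theorem symR_mul_mul_eSym (ht : t ≠ 0) {s : DAHA q t} (hs : Commute 𝐓 s) :
    symR q t * (s * 𝐞) = 𝐘₁ * (𝐗₁ * (s * 𝐞)) + t⁻¹ ^ 2 • (𝐘₂ * (𝐗₂ * (s * 𝐞))) := by
  have Ti_mul : 𝐓⁻¹ * (s * 𝐞) = t⁻¹ • (s * 𝐞) := by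
    rw [← mul_assoc, (commute_Ti_of_commute_T hs).eq, mul_assoc, Ti_mul_eSym ht, mul_smul_comm]
  simp only [symR_eq, add_mul, mul_assoc, Ti_mul, mul_smul_comm, smul_smul, pow_two]

theorem symR_mul_eSym (ht : t ≠ 0) :
    symR q t * 𝐞 = 𝐘₁ * (𝐗₁ * 𝐞) + t⁻¹ ^ 2 • (𝐘₂ * (𝐗₂ * 𝐞)) := by
  simpa only [one_mul] using symR_mul_mul_eSym ht (Commute.one_right 𝐓)

theorem pi_mul_X1_mul_eSym (ht : t ≠ 0) :
    𝛑 * (𝐗₁ * 𝐞) = t⁻¹ • (𝐗₂ * (𝐗₂ * 𝐞)) - (t - t⁻¹) • (𝐗₁ * (𝐗₂ * 𝐞)) := by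
  rw [pi, T_mul_X1, mul_assoc, ← mul_assoc 𝐓⁻¹, Ti_mul_X1 ht, sub_mul, mul_assoc 𝐗₂ 𝐓⁻¹,
    Ti_mul_eSym ht, mul_sub, mul_smul_comm, mul_smul_comm, smul_mul_assoc, mul_smul_comm,
    ← mul_assoc 𝐗₂ 𝐗₁, ← commute_X1_X2.eq, mul_assoc 𝐗₁]

theorem pi_mul_X2_mul_eSym (ht : t ≠ 0) : 𝛑 * (𝐗₂ * 𝐞) = t • (𝐗₁ * (𝐗₂ * 𝐞)) := by
  rw [pi, T_mul_X1, mul_assoc, ← mul_assoc 𝐓⁻¹, Ti_mul_X2, mul_assoc 𝐗₁, T_mul_eSym ht,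
    mul_smul_comm, mul_smul_comm, ← mul_assoc, ← commute_X1_X2.eq, mul_assoc]

theorem symR_mul_symR_mul_eSym (hq : q ≠ 0) (ht : t ≠ 0) :
    symR q t * symR q t * 𝐞 =
      (((1 + t ^ 2) * (q⁻¹ ^ 2 + t⁻¹ ^ 2)) • (𝐘₁ * 𝐘₂ * (𝐗₁ * 𝐗₂))
        - (q⁻¹ ^ 2) • (𝐘₁ * 𝐘₂ * (𝐗₁ + 𝐗₂) * (𝐗₁ + 𝐗₂))
        - (q⁻¹ ^ 2) • ((𝐘₁ + 𝐘₂) * (𝐘₁ + 𝐘₂) * (𝐗₁ * 𝐗₂))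
        + (q⁻¹ ^ 2) • ((𝐘₁ + 𝐘₂) * symR q t * (𝐗₁ + 𝐗₂))) * 𝐞 := by
  have symR_mul_sumX := symR_mul_mul_eSym ht (commute_T_X1_add_X2 (q := q) ht)
  simp only [add_mul] at symR_mul_sumX
  simp only [mul_assoc, add_mul, sub_mul, smul_mul_assoc]
  rw [symR_mul_mul_eSym ht (commute_T_symR ht), symR_mul_eSym ht, symR_mul_sumX]
  simp only [mul_add, mul_sub, smul_add, smul_sub, sub_mul, mul_smul_comm, smul_mul_assoc,
    mul_assoc, add_mul,
    mul_mul_eq_of_mul_eq (X1_mul_Y1 hq ht), mul_mul_eq_of_mul_eq (X1_mul_Y2 ht),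
    mul_mul_eq_of_mul_eq (X2_mul_Y1 hq ht), mul_mul_eq_of_mul_eq (X2_mul_Y2 hq ht),
    pi_mul_X1_mul_eSym ht, pi_mul_X2_mul_eSym ht,
    mul_mul_eq_of_mul_eq commute_X1_X2.eq, mul_mul_eq_of_mul_eq commute_Y1_Y2.eq]
  match_scalars <;> field_simp <;> ring

end Idempotent

section SphericalHom

theorem prodX_mul_prodXi : 𝐗₁ * 𝐗₂ * (𝐗₂⁻¹ * 𝐗₁⁻¹) = 1 := by
  rw [mul_assoc, mul_mul_eq_of_mul_eq X2_mul_X2i, one_mul, X1_mul_X1i]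

theorem prodXi_mul_prodX : 𝐗₂⁻¹ * 𝐗₁⁻¹ * (𝐗₁ * 𝐗₂) = 1 := by
  rw [mul_assoc, mul_mul_eq_of_mul_eq X1i_mul_X1, one_mul, X2i_mul_X2]

theorem prodY_mul_prodYi : 𝐘₁ * 𝐘₂ * (𝐘₂⁻¹ * 𝐘₁⁻¹) = 1 := by
  rw [mul_assoc, mul_mul_eq_of_mul_eq Y2_mul_Y2i, one_mul, Y1_mul_Y1i]

theorem prodYi_mul_prodY : 𝐘₂⁻¹ * 𝐘₁⁻¹ * (𝐘₁ * 𝐘₂) = 1 := by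
  rw [mul_assoc, mul_mul_eq_of_mul_eq Y1i_mul_Y1, one_mul, Y2i_mul_Y2]

theorem commute_T_prodXi : Commute 𝐓 (𝐗₂⁻¹ * 𝐗₁⁻¹) :=
  commute_of_mul_eq_one commute_T_X1_mul_X2 prodX_mul_prodXi prodXi_mul_prodX

theorem commute_T_prodYi : Commute 𝐓 (𝐘₂⁻¹ * 𝐘₁⁻¹) :=
  commute_of_mul_eq_one commute_T_Y1_mul_Y2 prodY_mul_prodYi prodYi_mul_prodY

variable (q t) in
/-- Lifts to the centralizer of `T` of the images of the generators of `𝒜` in the spherical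
algebra. -/
def sphericalGen : AGen → DAHA q t
  | .P1 => 𝐗₁ + 𝐗₂
  | .P2 => 𝐗₁ * 𝐗₂
  | .P2i => 𝐗₂⁻¹ * 𝐗₁⁻¹
  | .Q1 => 𝐘₁ + 𝐘₂
  | .Q2 => 𝐘₁ * 𝐘₂
  | .Q2i => 𝐘₂⁻¹ * 𝐘₁⁻¹
  | .R => symR q t

theorem commute_T_sphericalGen (ht : t ≠ 0) : ∀ x, Commute 𝐓 (sphericalGen q t x)
  | .P1 => commute_T_X1_add_X2 ht
  | .P2 => commute_T_X1_mul_X2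
  | .P2i => commute_T_prodXi
  | .Q1 => commute_T_Y1_add_Y2 ht
  | .Q2 => commute_T_Y1_mul_Y2
  | .Q2i => commute_T_prodYi
  | .R => commute_T_symR ht

theorem lift_sphericalGen_mul_eSym_of_rel (hq : q ≠ 0) (ht : t ≠ 0) {a b : FA}
    (h : ARel q t a b) :
    FreeAlgebra.lift ℂ (sphericalGen q t) a * 𝐞 = FreeAlgebra.lift ℂ (sphericalGen q t) b * 𝐞 := by
  cases h
  case RR =>
    simpa only [gA, map_mul, map_add, map_sub, map_smul, FreeAlgebra.lift_ι_apply, sphericalGen]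
      using symR_mul_symR_mul_eSym hq ht
  all_goals
    simp only [gA, map_mul, map_add, map_smul, map_one, FreeAlgebra.lift_ι_apply, sphericalGen]
    congr 1
  case P2P2i => exact prodX_mul_prodXi
  case P2iP2 => exact prodXi_mul_prodX
  case Q2Q2i => exact prodY_mul_prodYi
  case Q2iQ2 => exact prodYi_mul_prodY
  case P2P1 =>
    have := commute_X1_X2 (q := q) (t := t)
    exact (((Commute.refl _).mul_left this.symm).add_right (this.mul_left (.refl _))).eq
  case Q2Q1 =>
    have := commute_Y1_Y2 (q := q) (t := t)
    exact (((Commute.refl _).mul_left this.symm).add_right (this.mul_left (.refl _))).eq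
  case P2Q2 => exact prodX_mul_prodY hq
  case P2Q1 => exact prodX_mul_sumY hq
  case P1Q2 => exact sumX_mul_prodY hq
  case P1Q1 => exact sumX_mul_sumY hq ht
  case P2R => exact prodX_mul_symR hq
  case RQ2 => exact symR_mul_prodY hq
  case P1R => exact sumX_mul_symR hq ht
  case RQ1 => exact symR_mul_sumY hq ht

/-- The homomorphism from the free algebra to the centralizer of `e` that sends the generators
of `𝒜` to `sphericalGen`. -/
def centralizerLift (ht : t ≠ 0) : FA →ₐ[ℂ] Subalgebra.centralizer ℂ {𝐞} :=
  FreeAlgebra.lift ℂ fun x ↦ ⟨sphericalGen q t x, (Subalgebra.mem_centralizer_iff ℂ).2 (by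
    rintro _ rfl
    exact commute_eSym_of_commute_T (commute_T_sphericalGen ht x))⟩

theorem coe_centralizerLift (ht : t ≠ 0) (w : FA) :
    (centralizerLift (q := q) ht w : DAHA q t) = FreeAlgebra.lift ℂ (sphericalGen q t) w := by
  have : (Subalgebra.val _).comp (centralizerLift (q := q) ht) =
      FreeAlgebra.lift ℂ (sphericalGen q t) :=
    FreeAlgebra.hom_ext (by ext x; simp [centralizerLift])
  exact DFunLike.congr_fun this w

theorem centralizerToCorner_centralizerLift_eq_of_rel (hq : q ≠ 0) (ht : t ≠ 0)
    (he : IsIdempotentElem 𝐞) ⦃a b : FA⦄ (h : ARel q t a b) :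
    (centralizerToCorner ℂ he).comp (centralizerLift ht) a =
      (centralizerToCorner ℂ he).comp (centralizerLift ht) b := by
  refine Subtype.ext ?_
  change (centralizerLift (q := q) ht a).1 * 𝐞 = (centralizerLift (q := q) ht b).1 * 𝐞
  simpa only [coe_centralizerLift] using lift_sphericalGen_mul_eSym_of_rel hq ht h

/-- The homomorphism from `𝒜` to the spherical algebra `eHe`, the latter with unit `e`. -/
def sphericalHom (hq : q ≠ 0) (ht : t ≠ 0) (ht2 : t ^ 2 ≠ -1) :
    AlgA q t →ₐ[ℂ] (isIdempotentElem_eSym (q := q) ht ht2).Corner :=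
  RingQuot.liftAlgHom ℂ ⟨(centralizerToCorner ℂ (isIdempotentElem_eSym ht ht2)).comp
    (centralizerLift ht), centralizerToCorner_centralizerLift_eq_of_rel hq ht _⟩

theorem coe_sphericalHom_mkAlgHom (hq : q ≠ 0) (ht : t ≠ 0) (ht2 : t ^ 2 ≠ -1) (w : FA) :
    (sphericalHom hq ht ht2 (RingQuot.mkAlgHom ℂ (ARel q t) w)).val =
      FreeAlgebra.lift ℂ (sphericalGen q t) w * 𝐞 := by
  rw [sphericalHom, RingQuot.liftAlgHom_mkAlgHom_apply, ← coe_centralizerLift ht]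
  rfl

theorem coe_sphericalHom_gen (hq : q ≠ 0) (ht : t ≠ 0) (ht2 : t ^ 2 ≠ -1) (x : AGen) :
    (sphericalHom hq ht ht2 (RingQuot.mkAlgHom ℂ (ARel q t) (gA x))).val =
      sphericalGen q t x * 𝐞 := by
  rw [coe_sphericalHom_mkAlgHom, gA, FreeAlgebra.lift_ι_apply]

theorem eSym_mul_mul_eSym_of_commute_T (ht : t ≠ 0) (ht2 : t ^ 2 ≠ -1) {s : DAHA q t}
    (hs : Commute 𝐓 s) : 𝐞 * s * 𝐞 = s * 𝐞 := by
  rw [(commute_eSym_of_commute_T hs).eq, mul_assoc, (isIdempotentElem_eSym ht ht2).eq]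

theorem eSym_mul_Y2_mul_X2_mul_eSym (ht : t ≠ 0) :
    𝐞 * (𝐘₂ * 𝐗₂) * 𝐞 = 𝐞 * (𝐘₁ * 𝐗₁) * 𝐞 := by
  have : 𝐘₂ * 𝐗₂ = 𝐓⁻¹ * (𝐘₁ * 𝐗₁) * 𝐓 := by
    rw [← T_mul_X1_mul_T, ← Ti_mul_Y1_mul_Ti]
    simp only [mul_assoc, mul_mul_eq_of_mul_eq Ti_mul_T, one_mul]
  rw [this, ← mul_assoc, ← mul_assoc, eSym_mul_Ti ht, mul_assoc _ 𝐓, T_mul_eSym ht,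
    mul_smul_comm, smul_mul_assoc, smul_mul_assoc, smul_inv_smul₀ ht]

theorem eSym_mul_symR_mul_eSym (ht : t ≠ 0) :
    𝐞 * symR q t * 𝐞 = (1 + t⁻¹ ^ 2) • (𝐞 * (𝐘₁ * 𝐗₁) * 𝐞) := by
  rw [mul_assoc, symR_mul_eSym ht, add_smul, one_smul]
  nth_rw 2 [← eSym_mul_Y2_mul_X2_mul_eSym ht]
  simp only [mul_add, mul_smul_comm, mul_assoc]

theorem eSym_mul_R_mul_eSym (ht : t ≠ 0) (ht2 : t ^ 2 ≠ -1) :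
    𝐞 * (t⁻¹ ^ 2 • (𝐘₁ * 𝐗₁) + 𝐘₂ * 𝐗₂) * 𝐞 = symR q t * 𝐞 := by
  rw [← eSym_mul_mul_eSym_of_commute_T ht ht2 (commute_T_symR ht), eSym_mul_symR_mul_eSym ht,
    mul_add, add_mul, eSym_mul_Y2_mul_X2_mul_eSym ht, mul_smul_comm, smul_mul_assoc, add_smul,
    one_smul, add_comm]

theorem eSym_mul_sumX_mul_eSym (ht : t ≠ 0) :
    𝐞 * (𝐗₁ + 𝐗₂) * 𝐞 = (1 + t ^ 2) • (𝐞 * 𝐗₁ * 𝐞) := by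
  rw [← T_mul_X1_mul_T, mul_add, add_mul, ← mul_assoc, ← mul_assoc, eSym_mul_T ht, mul_assoc _ 𝐓,
    T_mul_eSym ht, smul_mul_assoc, smul_mul_assoc, mul_smul_comm, smul_smul, ← sq, add_smul,
    one_smul]

theorem eSym_mul_sumY_mul_eSym (ht : t ≠ 0) :
    𝐞 * (𝐘₁ + 𝐘₂) * 𝐞 = (1 + t⁻¹ ^ 2) • (𝐞 * 𝐘₁ * 𝐞) := by
  rw [← Ti_mul_Y1_mul_Ti, mul_add, add_mul, ← mul_assoc, ← mul_assoc, eSym_mul_Ti ht,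
    mul_assoc _ 𝐓⁻¹, Ti_mul_eSym ht, smul_mul_assoc, smul_mul_assoc, mul_smul_comm, smul_smul,
    ← sq, add_smul, one_smul]

end SphericalHom

section PBW

open Algebra Submodule

theorem Ti_mem {𝒮 : Subalgebra ℂ (DAHA q t)} (ht : t ≠ 0) (hT : 𝐓 ∈ 𝒮) : 𝐓⁻¹ ∈ 𝒮 := by
  rw [Ti_eq ht]
  exact sub_mem hT (𝒮.smul_mem 𝒮.one_mem _)

theorem adjoin_T_pi_Y (ht : t ≠ 0) :
    adjoin ℂ ({1, 𝐓, 𝛑, 𝛑⁻¹} ∪ {𝐘₁, 𝐘₂, 𝐘₂⁻¹ * 𝐘₁⁻¹} : Set (DAHA q t)) = ⊤ := by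
  set 𝒮 := adjoin ℂ ({1, 𝐓, 𝛑, 𝛑⁻¹} ∪ {𝐘₁, 𝐘₂, 𝐘₂⁻¹ * 𝐘₁⁻¹} : Set (DAHA q t))
  have T_mem : 𝐓 ∈ 𝒮 := subset_adjoin (by simp)
  have pi_mem : 𝛑 ∈ 𝒮 := subset_adjoin (by simp)
  have piInv_mem : 𝛑⁻¹ ∈ 𝒮 := subset_adjoin (by simp)
  have Y1_mem : 𝐘₁ ∈ 𝒮 := subset_adjoin (by simp)
  have Y2_mem : 𝐘₂ ∈ 𝒮 := subset_adjoin (by simp)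
  have prodYi_mem : 𝐘₂⁻¹ * 𝐘₁⁻¹ ∈ 𝒮 := subset_adjoin (by simp)
  have Ti_mem : 𝐓⁻¹ ∈ 𝒮 := Ti_mem ht T_mem
  rw [← top_le_iff, ← adjoin_range_mkAlgHom_ι, adjoin_le_iff]
  rintro _ ⟨x, rfl⟩
  cases x
  case T => exact T_mem
  case Ti => exact Ti_mem
  case X1 =>
    change 𝐗₁ ∈ 𝒮
    rw [X1_eq]
    exact mul_mem Ti_mem pi_mem
  case X1i =>
    change 𝐗₁⁻¹ ∈ 𝒮
    rw [X1i_eq]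
    exact mul_mem piInv_mem T_mem
  case X2 =>
    change 𝐗₂ ∈ 𝒮
    rw [X2_eq]
    exact mul_mem pi_mem T_mem
  case X2i =>
    change 𝐗₂⁻¹ ∈ 𝒮
    rw [X2i_eq]
    exact mul_mem Ti_mem piInv_mem
  case Y1 => exact Y1_mem
  case Y1i =>
    have := mul_mem Y2_mem prodYi_mem
    rwa [mul_mul_eq_of_mul_eq Y2_mul_Y2i, one_mul] at this
  case Y2 => exact Y2_mem
  case Y2i =>
    have := mul_mem prodYi_mem Y1_mem
    rwa [mul_assoc, Y1i_mul_Y1, mul_one] at this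

variable (q t) in
/-- The subalgebra of Laurent polynomials in `X₁` and `X₂`. -/
def laurentX : Subalgebra ℂ (DAHA q t) := adjoin ℂ {𝐗₁, 𝐗₂, 𝐗₂⁻¹ * 𝐗₁⁻¹}

variable (q t) in
/-- The subalgebra of Laurent polynomials in `Y₁` and `Y₂`. -/
def laurentY : Subalgebra ℂ (DAHA q t) := adjoin ℂ {𝐘₁, 𝐘₂, 𝐘₂⁻¹ * 𝐘₁⁻¹}

variable (q t) in
/-- The span of the products `fv` with `f` a Laurent polynomial in the `Xᵢ` and `v ∈ {1, T}`;
it is the affine Hecke algebra generated by `T` and the `Xᵢ`. -/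
def affineHeckeX : Submodule ℂ (DAHA q t) := (laurentX q t).toSubmodule * span ℂ {1, 𝐓}

theorem X1_mem_laurentX : 𝐗₁ ∈ laurentX q t := subset_adjoin (by simp)

theorem X2_mem_laurentX : 𝐗₂ ∈ laurentX q t := subset_adjoin (by simp)

theorem prodXi_mem_laurentX : 𝐗₂⁻¹ * 𝐗₁⁻¹ ∈ laurentX q t := subset_adjoin (by simp)

theorem Y1_mem_laurentY : 𝐘₁ ∈ laurentY q t := subset_adjoin (by simp)

theorem Y2_mem_laurentY : 𝐘₂ ∈ laurentY q t := subset_adjoin (by simp)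

theorem prodYi_mem_laurentY : 𝐘₂⁻¹ * 𝐘₁⁻¹ ∈ laurentY q t := subset_adjoin (by simp)

theorem mem_affineHeckeX {f : DAHA q t} (hf : f ∈ laurentX q t) : f ∈ affineHeckeX q t := by
  rw [← mul_one f]
  exact mul_mem_mul hf (subset_span (Set.mem_insert 1 {𝐓}))

theorem mul_T_mem_affineHeckeX {f : DAHA q t} (hf : f ∈ laurentX q t) :
    f * 𝐓 ∈ affineHeckeX q t := mul_mem_mul hf (subset_span (Set.mem_insert_of_mem 1 rfl))

theorem mul_Ti_mem_affineHeckeX (ht : t ≠ 0) {f : DAHA q t} (hf : f ∈ laurentX q t) :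
    f * 𝐓⁻¹ ∈ affineHeckeX q t := by
  rw [Ti_eq ht, mul_sub, mul_smul_one]
  exact sub_mem (mul_T_mem_affineHeckeX hf) (smul_mem _ _ (mem_affineHeckeX hf))

theorem span_one_T_mul_self_le (ht : t ≠ 0) :
    span ℂ {1, 𝐓} * span ℂ {1, 𝐓} ≤ span ℂ {1, 𝐓} := by
  have one_mem : (1 : DAHA q t) ∈ span ℂ {1, 𝐓} := subset_span (by simp)
  have T_mem : 𝐓 ∈ span ℂ {1, 𝐓} := subset_span (by simp)
  refine span_mul_span ℂ {1, 𝐓} {1, 𝐓} ▸ span_le.2 (Set.mul_subset_iff.2 ?_)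
  rintro a (rfl | rfl) b hb
  · rw [one_mul]
    exact subset_span hb
  obtain rfl | rfl := hb
  · rw [mul_one]
    exact T_mem
  · rw [T_mul_T ht]
    exact add_mem one_mem (smul_mem _ _ T_mem)

theorem span_one_T_mul_laurentX_le (ht : t ≠ 0) :
    span ℂ {1, 𝐓} * (laurentX q t).toSubmodule ≤ affineHeckeX q t := by
  refine span_mul_adjoin_le ?_
  rintro _ (rfl | rfl) s hs
  · rw [one_mul]
    exact mem_affineHeckeX (subset_adjoin hs)
  obtain rfl | rfl | rfl := hs
  · rw [T_mul_X1]
    exact mul_Ti_mem_affineHeckeX ht X2_mem_laurentX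
  · rw [T_mul_X2 ht]
    exact add_mem (mul_T_mem_affineHeckeX X1_mem_laurentX)
      (smul_mem _ _ (mem_affineHeckeX X2_mem_laurentX))
  · rw [commute_T_prodXi.eq]
    exact mul_T_mem_affineHeckeX prodXi_mem_laurentX

theorem affineHeckeX_mul_self_le (ht : t ≠ 0) :
    affineHeckeX q t * affineHeckeX q t ≤ affineHeckeX q t := calc
  affineHeckeX q t * affineHeckeX q t =
      (laurentX q t).toSubmodule * (span ℂ {1, 𝐓} * (laurentX q t).toSubmodule) *
        span ℂ {1, 𝐓} := by simp only [affineHeckeX, mul_assoc]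
  _ ≤ (laurentX q t).toSubmodule * affineHeckeX q t * span ℂ {1, 𝐓} :=
    mul_le_mul' (mul_le_mul' le_rfl (span_one_T_mul_laurentX_le ht)) le_rfl
  _ = (laurentX q t).toSubmodule * (laurentX q t).toSubmodule *
        (span ℂ {1, 𝐓} * span ℂ {1, 𝐓}) := by simp only [affineHeckeX, mul_assoc]
  _ ≤ affineHeckeX q t :=
    mul_le_mul' (laurentX q t).isIdempotentElem_toSubmodule.eq.le (span_one_T_mul_self_le ht)

theorem span_T_pi_mul_affineHeckeX_le (ht : t ≠ 0) :
    span ℂ {1, 𝐓, 𝛑, 𝛑⁻¹} * affineHeckeX q t ≤ affineHeckeX q t := by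
  refine le_trans (mul_le_mul' (span_le.2 ?_) le_rfl) (affineHeckeX_mul_self_le ht)
  have T_mem : 𝐓 ∈ affineHeckeX q t := one_mul 𝐓 ▸ mul_T_mem_affineHeckeX (one_mem _)
  rintro _ (rfl | rfl | rfl | rfl)
  · exact mem_affineHeckeX (one_mem _)
  · exact T_mem
  · rw [pi, T_mul_X1]
    exact mul_Ti_mem_affineHeckeX ht X2_mem_laurentX
  · have X1i_eq : 𝐗₁⁻¹ = 𝐗₂ * (𝐗₂⁻¹ * 𝐗₁⁻¹) := by
      rw [mul_mul_eq_of_mul_eq X2_mul_X2i, one_mul]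
    rw [piInv, X1i_eq]
    exact mul_Ti_mem_affineHeckeX ht (mul_mem X2_mem_laurentX prodXi_mem_laurentX)

theorem piInv_mul_Y1 : 𝛑⁻¹ * 𝐘₁ = 𝐘₂ * 𝛑⁻¹ := by
  simpa only [inv_one, one_smul] using inv_mul_eq_smul_of_mul_eq_smul (one_ne_zero (α := ℂ))
    pi_mul_piInv piInv_mul_pi (pi_mul_Y2.trans (one_smul ℂ (𝐘₁ * 𝛑)).symm)

theorem piInv_mul_Y2 (hq : q ≠ 0) : 𝛑⁻¹ * 𝐘₂ = (q⁻¹ ^ 2)⁻¹ • (𝐘₁ * 𝛑⁻¹) :=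
  inv_mul_eq_smul_of_mul_eq_smul (pow_ne_zero 2 (inv_ne_zero hq)) pi_mul_piInv piInv_mul_pi
    (pi_mul_Y1 hq)

theorem pi_mul_prodYi (hq : q ≠ 0) :
    𝛑 * (𝐘₂⁻¹ * 𝐘₁⁻¹) = (q⁻¹ ^ 2)⁻¹ • (𝐘₂⁻¹ * 𝐘₁⁻¹ * 𝛑) :=
  mul_inv_eq_smul_of_mul_eq_smul (pow_ne_zero 2 (inv_ne_zero hq)) prodY_mul_prodYi
    prodYi_mul_prodY (pi_mul_Y1_mul_Y2 hq)

theorem piInv_mul_prodYi (hq : q ≠ 0) :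
    𝛑⁻¹ * (𝐘₂⁻¹ * 𝐘₁⁻¹) = (q⁻¹ ^ 2)⁻¹⁻¹ • (𝐘₂⁻¹ * 𝐘₁⁻¹ * 𝛑⁻¹) :=
  inv_mul_eq_smul_of_mul_eq_smul (inv_ne_zero (pow_ne_zero 2 (inv_ne_zero hq))) pi_mul_piInv
    piInv_mul_pi (pi_mul_prodYi hq)

theorem laurentY_mul_affineHeckeX (hq : q ≠ 0) (ht : t ≠ 0) :
    (laurentY q t).toSubmodule * affineHeckeX q t = ⊤ := by
  have mul_mem {y g : DAHA q t} (hy : y ∈ laurentY q t) (hg : g ∈ ({1, 𝐓, 𝛑, 𝛑⁻¹} : Set _)) :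
      y * g ∈ (laurentY q t).toSubmodule * span ℂ {1, 𝐓, 𝛑, 𝛑⁻¹} :=
    mul_mem_mul hy (subset_span hg)
  refine adjoin_mul_eq_top (adjoin_T_pi_Y ht) (mem_affineHeckeX (one_mem _)) ?_
    ((span_T_pi_mul_affineHeckeX_le ht).trans
      (le_mul_of_one_le_left' (Submodule.one_le.2 (one_mem (laurentY q t)))))
  rintro _ (rfl | rfl | rfl | rfl) s hs
  · rw [one_mul, ← mul_one s]
    exact mul_mem (subset_adjoin hs) (by simp)
  all_goals obtain rfl | rfl | rfl := hs
  · rw [T_mul_Y1 ht]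
    have Y1_mem := mul_mem Y1_mem_laurentY (Set.mem_insert 1 _)
    rw [mul_one] at Y1_mem
    exact add_mem (mul_mem Y2_mem_laurentY (by simp)) (smul_mem _ _ Y1_mem)
  · rw [T_mul_Y2, Ti_eq ht, mul_sub, mul_smul_comm]
    exact sub_mem (mul_mem Y1_mem_laurentY (by simp))
      (smul_mem _ _ (mul_mem Y1_mem_laurentY (by simp)))
  · rw [commute_T_prodYi.eq]
    exact mul_mem prodYi_mem_laurentY (by simp)
  · rw [pi_mul_Y1 hq]
    exact smul_mem _ _ (mul_mem Y2_mem_laurentY (by simp))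
  · rw [pi_mul_Y2]
    exact mul_mem Y1_mem_laurentY (by simp)
  · rw [pi_mul_prodYi hq]
    exact smul_mem _ _ (mul_mem prodYi_mem_laurentY (by simp))
  · rw [piInv_mul_Y1]
    exact mul_mem Y2_mem_laurentY (by simp)
  · rw [piInv_mul_Y2 hq]
    exact smul_mem _ _ (mul_mem Y1_mem_laurentY (by simp))
  · rw [piInv_mul_prodYi hq]
    exact smul_mem _ _ (mul_mem prodYi_mem_laurentY (by simp))

end PBW

section Surjectivity

open Algebra Submodule

variable (q t) in
/-- The subalgebra of the centralizer of `T` generated by the lifts of the generators of `𝒜`. -/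
def symmetricSubalgebra : Subalgebra ℂ (DAHA q t) := adjoin ℂ (Set.range (sphericalGen q t))

theorem sphericalGen_mem (x : AGen) : sphericalGen q t x ∈ symmetricSubalgebra q t :=
  subset_adjoin (Set.mem_range_self x)

theorem commute_T_of_mem_symmetricSubalgebra (ht : t ≠ 0) {s : DAHA q t}
    (hs : s ∈ symmetricSubalgebra q t) : Commute 𝐓 s :=
  commute_of_mem_adjoin_of_forall_mem_commute hs
    (Set.forall_mem_range.2 (commute_T_sphericalGen ht))

theorem exists_sphericalHom_eq (hq : q ≠ 0) (ht : t ≠ 0) (ht2 : t ^ 2 ≠ -1) {s : DAHA q t}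
    (hs : s ∈ symmetricSubalgebra q t) : ∃ w, (sphericalHom hq ht ht2 w).val = s * 𝐞 := by
  rw [symmetricSubalgebra, adjoin_range_eq_range_freeAlgebra_lift] at hs
  obtain ⟨w, rfl⟩ := hs
  exact ⟨_, coe_sphericalHom_mkAlgHom hq ht ht2 w⟩

theorem exists_eq_symmetric_add_mul_X1 {f : DAHA q t} (hf : f ∈ laurentX q t) :
    ∃ b ∈ symmetricSubalgebra q t, ∃ c ∈ symmetricSubalgebra q t, f = b + 𝐗₁ * c := by
  have X1_prodXi : Commute 𝐗₁ (𝐗₂⁻¹ * 𝐗₁⁻¹) := commute_of_mul_eq_one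
    ((Commute.refl 𝐗₁).mul_right commute_X1_X2) prodX_mul_prodXi prodXi_mul_prodX
  have X2_prodXi : Commute 𝐗₂ (𝐗₂⁻¹ * 𝐗₁⁻¹) := commute_of_mul_eq_one
    (commute_X1_X2.symm.mul_right (Commute.refl 𝐗₂)) prodX_mul_prodXi prodXi_mul_prodX
  have adjoin_le : adjoin ℂ {𝐗₁ + 𝐗₂, 𝐗₁ * 𝐗₂, 𝐗₂⁻¹ * 𝐗₁⁻¹} ≤ symmetricSubalgebra q t := by
    rintro _ h
    refine adjoin_mono ?_ h
    rintro _ (rfl | rfl | rfl)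
    exacts [⟨.P1, rfl⟩, ⟨.P2, rfl⟩, ⟨.P2i, rfl⟩]
  obtain ⟨b, hb, c, hc, rfl⟩ :=
    exists_eq_add_mul_of_mem_adjoin commute_X1_X2 X1_prodXi.symm X2_prodXi.symm hf
  have X1_c : Commute 𝐗₁ c := commute_of_mem_adjoin_of_forall_mem_commute hc (by
    rintro _ (rfl | rfl | rfl)
    exacts [(Commute.refl 𝐗₁).add_right commute_X1_X2,
      (Commute.refl 𝐗₁).mul_right commute_X1_X2, X1_prodXi])
  exact ⟨b, adjoin_le hb, c, adjoin_le hc, by rw [X1_c.eq]⟩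

theorem exists_eq_symmetric_add_mul_Y1 {f : DAHA q t} (hf : f ∈ laurentY q t) :
    ∃ b ∈ symmetricSubalgebra q t, ∃ c ∈ symmetricSubalgebra q t, f = b + c * 𝐘₁ := by
  have Y1_prodYi : Commute 𝐘₁ (𝐘₂⁻¹ * 𝐘₁⁻¹) := commute_of_mul_eq_one
    ((Commute.refl 𝐘₁).mul_right commute_Y1_Y2) prodY_mul_prodYi prodYi_mul_prodY
  have Y2_prodYi : Commute 𝐘₂ (𝐘₂⁻¹ * 𝐘₁⁻¹) := commute_of_mul_eq_one
    (commute_Y1_Y2.symm.mul_right (Commute.refl 𝐘₂)) prodY_mul_prodYi prodYi_mul_prodY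
  have adjoin_le : adjoin ℂ {𝐘₁ + 𝐘₂, 𝐘₁ * 𝐘₂, 𝐘₂⁻¹ * 𝐘₁⁻¹} ≤ symmetricSubalgebra q t := by
    rintro _ h
    refine adjoin_mono ?_ h
    rintro _ (rfl | rfl | rfl)
    exacts [⟨.Q1, rfl⟩, ⟨.Q2, rfl⟩, ⟨.Q2i, rfl⟩]
  obtain ⟨b, hb, c, hc, rfl⟩ :=
    exists_eq_add_mul_of_mem_adjoin commute_Y1_Y2 Y1_prodYi.symm Y2_prodYi.symm hf
  exact ⟨b, adjoin_le hb, c, adjoin_le hc, rfl⟩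

variable (q t) in
/-- The elements `s𝐞` of the spherical algebra with `s` in `symmetricSubalgebra`; by
`eSym_mul_mul_eSym_mem` they exhaust the spherical algebra. -/
def symmetricCorner : Submodule ℂ (DAHA q t) :=
  (symmetricSubalgebra q t).toSubmodule.map (LinearMap.mulRight ℂ 𝐞)

theorem mul_eSym_mem_symmetricCorner {s : DAHA q t} (hs : s ∈ symmetricSubalgebra q t) :
    s * 𝐞 ∈ symmetricCorner q t := ⟨s, hs, rfl⟩

theorem eSym_mul_X1_mul_eSym_mem (ht : t ≠ 0) (ht2 : t ^ 2 ≠ -1) :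
    𝐞 * 𝐗₁ * 𝐞 ∈ symmetricCorner q t := by
  refine ((symmetricCorner q t).smul_mem_iff (one_add_sq_ne_zero ht2)).1 ?_
  rw [← eSym_mul_sumX_mul_eSym ht, eSym_mul_mul_eSym_of_commute_T ht ht2 (commute_T_X1_add_X2 ht)]
  exact mul_eSym_mem_symmetricCorner (sphericalGen_mem .P1)

theorem eSym_mul_Y1_mul_eSym_mem (ht : t ≠ 0) (ht2 : t ^ 2 ≠ -1) :
    𝐞 * 𝐘₁ * 𝐞 ∈ symmetricCorner q t := by
  refine ((symmetricCorner q t).smul_mem_iff (one_add_inv_sq_ne_zero ht ht2)).1 ?_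
  rw [← eSym_mul_sumY_mul_eSym ht, eSym_mul_mul_eSym_of_commute_T ht ht2 (commute_T_Y1_add_Y2 ht)]
  exact mul_eSym_mem_symmetricCorner (sphericalGen_mem .Q1)

theorem eSym_mul_Y1_mul_X1_mul_eSym_mem (ht : t ≠ 0) (ht2 : t ^ 2 ≠ -1) :
    𝐞 * (𝐘₁ * 𝐗₁) * 𝐞 ∈ symmetricCorner q t := by
  refine ((symmetricCorner q t).smul_mem_iff (one_add_inv_sq_ne_zero ht ht2)).1 ?_
  rw [← eSym_mul_symR_mul_eSym ht, eSym_mul_mul_eSym_of_commute_T ht ht2 (commute_T_symR ht)]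
  exact mul_eSym_mem_symmetricCorner (sphericalGen_mem .R)

theorem eSym_mul_mul_mul_mul_eSym_mem (ht : t ≠ 0) {b u c : DAHA q t}
    (hb : b ∈ symmetricSubalgebra q t) (hu : 𝐞 * u * 𝐞 ∈ symmetricCorner q t)
    (hc : c ∈ symmetricSubalgebra q t) : 𝐞 * (b * u * c) * 𝐞 ∈ symmetricCorner q t := by
  obtain ⟨s, hs, h : s * 𝐞 = 𝐞 * u * 𝐞⟩ := hu
  have b_comm := commute_eSym_of_commute_T (commute_T_of_mem_symmetricSubalgebra ht hb)
  have c_comm := commute_eSym_of_commute_T (commute_T_of_mem_symmetricSubalgebra ht hc)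
  have : 𝐞 * (b * u * c) * 𝐞 = b * s * c * 𝐞 := calc
    𝐞 * (b * u * c) * 𝐞 = 𝐞 * b * u * (c * 𝐞) := by simp only [mul_assoc]
    _ = b * (𝐞 * u * 𝐞) * c := by rw [b_comm.eq, ← c_comm.eq]; simp only [mul_assoc]
    _ = b * s * c * 𝐞 := by rw [← h]; simp only [mul_assoc, c_comm.eq]
  rw [this]
  exact mul_eSym_mem_symmetricCorner (mul_mem (mul_mem hb hs) hc)

theorem eSym_mul_laurent_mul_eSym_mem (ht : t ≠ 0) (ht2 : t ^ 2 ≠ -1) {f g : DAHA q t}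
    (hf : f ∈ laurentY q t) (hg : g ∈ laurentX q t) : 𝐞 * (f * g) * 𝐞 ∈ symmetricCorner q t := by
  obtain ⟨b, hb, c, hc, rfl⟩ := exists_eq_symmetric_add_mul_Y1 hf
  obtain ⟨b', hb', c', hc', rfl⟩ := exists_eq_symmetric_add_mul_X1 hg
  have one_mem : 𝐞 * 1 * 𝐞 ∈ symmetricCorner q t := by
    rw [mul_one, (isIdempotentElem_eSym ht ht2).eq, ← one_mul 𝐞]
    exact mul_eSym_mem_symmetricCorner (one_mem _)
  have expand : (b + c * 𝐘₁) * (b' + 𝐗₁ * c') =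
      b * 1 * b' + b * 𝐗₁ * c' + c * 𝐘₁ * b' + c * (𝐘₁ * 𝐗₁) * c' := by noncomm_ring
  rw [expand]
  simp only [mul_add, add_mul]
  refine add_mem (add_mem (add_mem ?_ ?_) ?_) ?_
  · exact eSym_mul_mul_mul_mul_eSym_mem ht hb one_mem hb'
  · exact eSym_mul_mul_mul_mul_eSym_mem ht hb (eSym_mul_X1_mul_eSym_mem ht ht2) hc'
  · exact eSym_mul_mul_mul_mul_eSym_mem ht hc (eSym_mul_Y1_mul_eSym_mem ht ht2) hb'
  · exact eSym_mul_mul_mul_mul_eSym_mem ht hc (eSym_mul_Y1_mul_X1_mul_eSym_mem ht ht2) hc'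

theorem eSym_mul_mul_eSym_mem (hq : q ≠ 0) (ht : t ≠ 0) (ht2 : t ^ 2 ≠ -1) (a : DAHA q t) :
    𝐞 * a * 𝐞 ∈ symmetricCorner q t := by
  set N := (symmetricCorner q t).comap (LinearMap.mulLeft ℂ 𝐞 ∘ₗ LinearMap.mulRight ℂ 𝐞)
  have mem_N {a : DAHA q t} : a ∈ N ↔ 𝐞 * a * 𝐞 ∈ symmetricCorner q t := by
    rw [mul_assoc]; rfl
  have laurent_le : (laurentY q t).toSubmodule * (laurentX q t).toSubmodule ≤ N :=
    Submodule.mul_le.2 fun f hf g hg ↦ mem_N.2 (eSym_mul_laurent_mul_eSym_mem ht ht2 hf hg)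
  suffices (laurentY q t).toSubmodule * affineHeckeX q t ≤ N from
    mem_N.1 (this (laurentY_mul_affineHeckeX hq ht ▸ mem_top))
  rw [affineHeckeX, ← mul_assoc]
  refine Submodule.mul_le.2 fun x hx v hv ↦ mem_N.2 ?_
  obtain ⟨α, β, rfl⟩ := mem_span_pair.1 hv
  have T_absorbed : 𝐞 * (x * (α • 1 + β • 𝐓)) * 𝐞 = (α + β * t) • (𝐞 * x * 𝐞) := by
    simp only [mul_add, add_mul, mul_smul_comm, smul_mul_assoc, mul_one, mul_assoc,
      T_mul_eSym ht, add_smul, smul_smul]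
  rw [T_absorbed]
  exact smul_mem _ _ (mem_N.1 (laurent_le hx))

theorem sphericalHom_surjective (hq : q ≠ 0) (ht : t ≠ 0) (ht2 : t ^ 2 ≠ -1) :
    Function.Surjective (sphericalHom hq ht ht2) := by
  rintro ⟨_, a, rfl⟩
  obtain ⟨s, hs, h : s * 𝐞 = 𝐞 * a * 𝐞⟩ := eSym_mul_mul_eSym_mem hq ht ht2 a
  obtain ⟨w, hw⟩ := exists_sphericalHom_eq hq ht ht2 hs
  exact ⟨w, Subtype.ext (hw.trans h)⟩

end Surjectivity

section Lift

section Group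

variable {G : Type*} [Group G] {τ p y₁ y₂ : G}

theorem inv_mul_mul_mul_eq_mul_self (h : Commute (p * p) τ) : τ⁻¹ * p * (p * τ) = p * p := by
  rw [mul_assoc, ← mul_assoc p, h.eq, inv_mul_cancel_left]

theorem commute_inv_mul_mul (h : Commute (p * p) τ) : Commute (τ⁻¹ * p) (p * τ) := by
  rw [commute_iff_eq, inv_mul_mul_mul_eq_mul_self h, mul_assoc, mul_inv_cancel_left]

theorem inv_inv_mul_mul_eq (hτy : τ⁻¹ * y₁ * τ⁻¹ = y₂) (hpy : p * y₂ = y₁ * p) :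
    (τ⁻¹ * p)⁻¹ * y₂ = y₂ * (τ⁻¹ * p)⁻¹ * τ⁻¹ * τ⁻¹ := by
  have p_inv_mul_y₁ : p⁻¹ * y₁ = y₂ * p⁻¹ := by
    rw [inv_mul_eq_iff_eq_mul, ← mul_assoc, hpy, mul_inv_cancel_right]
  calc (τ⁻¹ * p)⁻¹ * y₂ = p⁻¹ * y₁ * τ⁻¹ := by rw [← hτy]; group
    _ = y₂ * (τ⁻¹ * p)⁻¹ * τ⁻¹ * τ⁻¹ := by rw [p_inv_mul_y₁]; group

/-- The values of the generators of the double affine Hecke algebra when `T`, `π = TX₁`, `Y₁`, `Y₂`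
take the values `τ`, `p`, `y₁`, `y₂`; the value of `X₂ = TX₁T` is then `pτ`. -/
def genOfPi (τ p y₁ y₂ : G) : DGen → G
  | .T => τ
  | .Ti => τ⁻¹
  | .X1 => τ⁻¹ * p
  | .X1i => (τ⁻¹ * p)⁻¹
  | .X2 => p * τ
  | .X2i => (p * τ)⁻¹
  | .Y1 => y₁
  | .Y1i => y₁⁻¹
  | .Y2 => y₂
  | .Y2i => y₂⁻¹

end Group

variable {A : Type*} [Ring A] [Algebra ℂ A] {τ p y₁ y₂ : Aˣ}

theorem mul_self_mul_eq_smul (hpy₁ : (p * y₁ : A) = q⁻¹ ^ 2 • (y₂ * p : A))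
    (hpy₂ : p * y₂ = y₁ * p) : (p * p * y₁ : A) = q⁻¹ ^ 2 • (y₁ * (p * p) : A) := by
  have hpy₂' : (p * y₂ : A) = y₁ * p := mod_cast congrArg Units.val hpy₂
  rw [mul_assoc, hpy₁, mul_smul_comm, ← mul_assoc, hpy₂', mul_assoc]

theorem lift_genOfPi_eq_of_DRel (hq : q ≠ 0) (ht : t ≠ 0)
    (hτ : (τ * τ : A) = 1 + (t - t⁻¹) • (τ : A)) (hpp : Commute (p * p) τ) (hy : Commute y₁ y₂)
    (hτy : τ⁻¹ * y₁ * τ⁻¹ = y₂) (hpy₁ : (p * y₁ : A) = q⁻¹ ^ 2 • (y₂ * p : A))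
    (hpy₂ : p * y₂ = y₁ * p) ⦃x y : FD⦄ (hxy : DRel q t x y) :
    FreeAlgebra.lift ℂ (Units.val ∘ genOfPi τ p y₁ y₂) x =
      FreeAlgebra.lift ℂ (Units.val ∘ genOfPi τ p y₁ y₂) y := by
  have lift_gen (g : DGen) :
      FreeAlgebra.lift ℂ (Units.val ∘ genOfPi τ p y₁ y₂) (gD g) = ↑(genOfPi τ p y₁ y₂ g) :=
    FreeAlgebra.lift_ι_apply _ g
  cases hxy
  case YXX =>
    simp only [map_mul, map_smul, lift_gen]
    simp only [genOfPi]
    rw [← Units.val_mul (τ⁻¹ * p), inv_mul_mul_mul_eq_mul_self hpp, Units.val_mul,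
      mul_self_mul_eq_smul hpy₁ hpy₂, smul_smul, ← mul_pow, mul_inv_cancel₀ hq, one_pow, one_smul]
  case hecke =>
    simp only [map_mul, map_add, map_sub, map_zero, map_smul, map_one, lift_gen, genOfPi,
      Algebra.algebraMap_eq_smul_one, add_mul, mul_sub, smul_mul_assoc, mul_smul_comm, one_mul,
      mul_one]
    rw [hτ]
    match_scalars <;> field_simp <;> ring
  all_goals
    simp only [map_mul, map_one, lift_gen, ← Units.val_mul, Units.val_eq_one, Units.val_inj]
  case TX1T => simp only [genOfPi, mul_inv_cancel_left]
  case TiY1Ti => exact hτy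
  case Xcomm => exact commute_inv_mul_mul hpp
  case Ycomm => exact hy
  case X1iY2 => exact inv_inv_mul_mul_eq hτy hpy₂
  all_goals exact mul_inv_cancel _

theorem exists_algHom_of_pi (hq : q ≠ 0) (ht : t ≠ 0)
    (hτ : (τ * τ : A) = 1 + (t - t⁻¹) • (τ : A)) (hpp : Commute (p * p) τ) (hy : Commute y₁ y₂)
    (hτy : τ⁻¹ * y₁ * τ⁻¹ = y₂) (hpy₁ : (p * y₁ : A) = q⁻¹ ^ 2 • (y₂ * p : A))
    (hpy₂ : p * y₂ = y₁ * p) :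
    ∃ φ : DAHA q t →ₐ[ℂ] A, φ 𝐓 = τ ∧ φ 𝐗₁ = ↑(τ⁻¹ * p) ∧ φ 𝐗₂ = ↑(p * τ) ∧
      φ 𝐘₁ = y₁ ∧ φ 𝐘₂ = y₂ := by
  let φ : DAHA q t →ₐ[ℂ] A :=
    RingQuot.liftAlgHom ℂ ⟨_, lift_genOfPi_eq_of_DRel hq ht hτ hpp hy hτy hpy₁ hpy₂⟩
  have φ_gen (g : DGen) : φ (RingQuot.mkAlgHom ℂ (DRel q t) (gD g)) = ↑(genOfPi τ p y₁ y₂ g) :=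
    (RingQuot.liftAlgHom_mkAlgHom_apply ..).trans (FreeAlgebra.lift_ι_apply _ g)
  exact ⟨φ, φ_gen .T, φ_gen .X1, φ_gen .X2, φ_gen .Y1, φ_gen .Y2⟩

end Lift

section GenericPoint

/-- The pairs `(a, b)` of nonzero complex numbers with `a / b` not a power of `q ^ 2`. They are the
joint eigenvalues of `(Y₁, Y₂)` in the induced representation below, and are stable under the
swap of coordinates and under multiplication of either coordinate by `q ^ 2`. -/
@[ext]
structure GenericPoint (q : ℂ) where
  a : ℂ
  b : ℂ
  a_ne_zero : a ≠ 0
  b_ne_zero : b ≠ 0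
  a_ne_zpow_mul_b : ∀ k : ℤ, a ≠ (q ^ 2) ^ k * b

namespace GenericPoint

theorem a_sub_b_ne_zero (z : GenericPoint q) : z.a - z.b ≠ 0 :=
  sub_ne_zero.2 (by simpa only [zpow_zero, one_mul] using z.a_ne_zpow_mul_b 0)

theorem b_ne_zpow_mul_a (hq : q ≠ 0) (z : GenericPoint q) (k : ℤ) : z.b ≠ (q ^ 2) ^ k * z.a := by
  intro h
  refine z.a_ne_zpow_mul_b (-k) ?_
  rw [h, zpow_neg, inv_mul_cancel_left₀ (zpow_ne_zero k (pow_ne_zero 2 hq))]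

/-- The involution `(a, b) ↦ (b, a)`. -/
@[simps]
def swap (hq : q ≠ 0) (z : GenericPoint q) : GenericPoint q where
  a := z.b
  b := z.a
  a_ne_zero := z.b_ne_zero
  b_ne_zero := z.a_ne_zero
  a_ne_zpow_mul_b := z.b_ne_zpow_mul_a hq

/-- The map `(a, b) ↦ (q⁻²b, a)`, a square root of the diagonal scaling by `q⁻²`. -/
@[simps]
def rotate (hq : q ≠ 0) : GenericPoint q ≃ GenericPoint q where
  toFun z :=
    { a := q⁻¹ ^ 2 * z.b
      b := z.a
      a_ne_zero := mul_ne_zero (pow_ne_zero 2 (inv_ne_zero hq)) z.b_ne_zero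
      b_ne_zero := z.a_ne_zero
      a_ne_zpow_mul_b k h := z.b_ne_zpow_mul_a hq (k + 1) (by
        rw [zpow_add_one₀ (pow_ne_zero 2 hq), mul_assoc, mul_left_comm, ← h]
        field_simp) }
  invFun z :=
    { a := z.b
      b := q ^ 2 * z.a
      a_ne_zero := z.b_ne_zero
      b_ne_zero := mul_ne_zero (pow_ne_zero 2 hq) z.a_ne_zero
      a_ne_zpow_mul_b k h := z.b_ne_zpow_mul_a hq (k + 1) (by
        rw [zpow_add_one₀ (pow_ne_zero 2 hq), mul_assoc, h]) }
  left_inv z := by ext <;> simp [hq]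
  right_inv z := by ext <;> simp [hq]

end GenericPoint

end GenericPoint

section InducedRepresentation

open LinearMap.GeneralLinearGroup (ofLinearEquiv)

variable {V : Type*} [AddCommGroup V] [Module ℂ V]

/-- The operator by which `T` acts on functions of `(Y₁, Y₂)` with values in a module `V` over the
subalgebra generated by `T` and `π`, where `N` is the action of `T` on `V` and `h = t - t⁻¹`. -/
def inducedT (hq : q ≠ 0) (h : ℂ) (N : Module.End ℂ V) : Module.End ℂ (GenericPoint q → V) where
  toFun F z := N (F (z.swap hq)) + (h * (z.a / (z.a - z.b))) • (F z - F (z.swap hq))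
  map_add' F G := by
    ext z
    simp only [Pi.add_apply, map_add]
    module
  map_smul' c F := by
    ext z
    simp only [Pi.smul_apply, map_smul, RingHom.id_apply]
    module

/-- The operator by which `π` acts on functions of `(Y₁, Y₂)` with values in `V`, where `M` is the
action of `π` on `V`. -/
def inducedPi (hq : q ≠ 0) (M : V ≃ₗ[ℂ] V) : (GenericPoint q → V) ≃ₗ[ℂ] (GenericPoint q → V) :=
  LinearEquiv.funCongrLeft ℂ V (GenericPoint.rotate hq) ≪≫ₗ LinearEquiv.piCongrRight fun _ ↦ M

variable (q V) in
/-- Multiplication by the coordinate function `a`, the action of `Y₁`. -/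
def inducedY1 : (GenericPoint q → V) ≃ₗ[ℂ] (GenericPoint q → V) :=
  LinearEquiv.piCongrRight fun z ↦ LinearEquiv.smulOfNeZero ℂ V z.a z.a_ne_zero

variable (q V) in
/-- Multiplication by the coordinate function `b`, the action of `Y₂`. -/
def inducedY2 : (GenericPoint q → V) ≃ₗ[ℂ] (GenericPoint q → V) :=
  LinearEquiv.piCongrRight fun z ↦ LinearEquiv.smulOfNeZero ℂ V z.b z.b_ne_zero

theorem inducedT_apply (hq : q ≠ 0) (h : ℂ) (N : Module.End ℂ V) (F : GenericPoint q → V)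
    (z : GenericPoint q) : inducedT hq h N F z =
      N (F (z.swap hq)) + (h * (z.a / (z.a - z.b))) • (F z - F (z.swap hq)) :=
  rfl

theorem inducedPi_apply (hq : q ≠ 0) (M : V ≃ₗ[ℂ] V) (F : GenericPoint q → V)
    (z : GenericPoint q) : inducedPi hq M F z = M (F (z.rotate hq)) :=
  rfl

theorem inducedY1_apply (F : GenericPoint q → V) (z : GenericPoint q) :
    inducedY1 q V F z = z.a • F z :=
  rfl

theorem inducedY2_apply (F : GenericPoint q → V) (z : GenericPoint q) :
    inducedY2 q V F z = z.b • F z :=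
  rfl

theorem inducedT_mul_self (hq : q ≠ 0) {h : ℂ} {N : Module.End ℂ V} (hN : N * N = 1 + h • N) :
    inducedT hq h N * inducedT hq h N = 1 + h • inducedT hq h N := by
  ext F z
  have N_N (w : V) : N (N w) = w + h • N w := LinearMap.congr_fun hN w
  have swap_swap : (z.swap hq).swap hq = z := rfl
  have h₁ := z.a_sub_b_ne_zero
  have h₂ : z.b - z.a ≠ 0 := (z.swap hq).a_sub_b_ne_zero
  simp only [Module.End.mul_apply, LinearMap.add_apply, Module.End.one_apply, Pi.add_apply,
    LinearMap.smul_apply, Pi.smul_apply, inducedT_apply, map_add, map_sub, map_smul, N_N,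
    swap_swap, GenericPoint.swap_a, GenericPoint.swap_b]
  match_scalars <;> field_simp <;> ring

theorem inducedY1_mul_inducedT_sub (hq : q ≠ 0) (h : ℂ) (N : Module.End ℂ V) :
    inducedY1 q V * (inducedT hq h N - h • 1) = inducedT hq h N * inducedY2 q V := by
  ext F z
  have h₁ := z.a_sub_b_ne_zero
  simp only [Module.End.mul_apply, LinearMap.sub_apply, Module.End.one_apply, Pi.sub_apply,
    LinearMap.smul_apply, Pi.smul_apply, inducedT_apply, map_smul, LinearEquiv.coe_coe,
    inducedY1_apply, inducedY2_apply, GenericPoint.swap_b]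
  match_scalars <;> field_simp
  ring

theorem commute_inducedPi_mul_self_inducedT (hq : q ≠ 0) (h : ℂ) {N : Module.End ℂ V}
    {M : V ≃ₗ[ℂ] V} (hMN : ∀ v, M (M (N v)) = N (M (M v))) :
    Commute (inducedPi hq M * inducedPi hq M : Module.End ℂ (GenericPoint q → V))
      (inducedT hq h N) := by
  refine LinearMap.ext fun F ↦ funext fun z ↦ ?_
  have swap_rotate : ((z.rotate hq).rotate hq).swap hq = ((z.swap hq).rotate hq).rotate hq := rfl
  have ratio : q⁻¹ ^ 2 * z.a / (q⁻¹ ^ 2 * z.a - q⁻¹ ^ 2 * z.b) = z.a / (z.a - z.b) := by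
    rw [← mul_sub, mul_div_mul_left _ _ (pow_ne_zero 2 (inv_ne_zero hq))]
  simp only [Module.End.mul_apply, LinearEquiv.coe_coe, inducedPi_apply, inducedT_apply, map_add,
    map_sub, map_smul, hMN, swap_rotate, GenericPoint.rotate_apply_a, GenericPoint.rotate_apply_b,
    ratio]

variable (q V) in
theorem commute_inducedY1_inducedY2 :
    Commute (inducedY1 q V : Module.End ℂ (GenericPoint q → V)) (inducedY2 q V) :=
  LinearMap.ext fun F ↦ funext fun z ↦ smul_comm z.a z.b (F z)

theorem inducedPi_mul_inducedY1 (hq : q ≠ 0) (M : V ≃ₗ[ℂ] V) :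
    (inducedPi hq M * inducedY1 q V : Module.End ℂ (GenericPoint q → V)) =
      q⁻¹ ^ 2 • (inducedY2 q V * inducedPi hq M : Module.End ℂ (GenericPoint q → V)) := by
  refine LinearMap.ext fun F ↦ funext fun z ↦ ?_
  simp only [Module.End.mul_apply, LinearMap.smul_apply, Pi.smul_apply, LinearEquiv.coe_coe,
    inducedPi_apply, inducedY1_apply, inducedY2_apply, map_smul, GenericPoint.rotate_apply_a,
    smul_smul]

theorem inducedPi_mul_inducedY2 (hq : q ≠ 0) (M : V ≃ₗ[ℂ] V) :
    (inducedPi hq M * inducedY2 q V : Module.End ℂ (GenericPoint q → V)) =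
      inducedY1 q V * inducedPi hq M :=
  LinearMap.ext fun F ↦ funext fun z ↦ map_smul M z.a (F (z.rotate hq))

theorem exists_inducedRep (hq : q ≠ 0) (ht : t ≠ 0) {N : Module.End ℂ V} {M : V ≃ₗ[ℂ] V}
    (hN : N * N = 1 + (t - t⁻¹) • N) (hMN : ∀ v, M (M (N v)) = N (M (M v))) :
    ∃ ρ : DAHA q t →ₐ[ℂ] Module.End ℂ (GenericPoint q → V),
      (∀ v, ρ 𝐓 (fun _ ↦ v) = fun _ ↦ N v) ∧
      (∀ v, ρ 𝐗₁ (fun _ ↦ v) = fun _ ↦ N (M v) - (t - t⁻¹) • M v) ∧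
      (∀ v, ρ 𝐗₂ (fun _ ↦ v) = fun _ ↦ M (N v)) ∧
      (∀ F z, ρ 𝐘₁ F z = z.a • F z) ∧ ∀ F z, ρ 𝐘₂ F z = z.b • F z := by
  have hT := inducedT_mul_self hq hN
  let τ : (Module.End ℂ (GenericPoint q → V))ˣ :=
    ⟨inducedT hq (t - t⁻¹) N, inducedT hq (t - t⁻¹) N - (t - t⁻¹) • 1,
      by rw [mul_sub, hT, mul_smul_comm, mul_one, add_sub_cancel_right],
      by rw [sub_mul, hT, smul_mul_assoc, one_mul, add_sub_cancel_right]⟩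
  have const_T (v : V) : inducedT hq (t - t⁻¹) N (fun _ ↦ v) = fun _ ↦ N v := by
    funext z
    rw [inducedT_apply, sub_self, smul_zero, add_zero]
  obtain ⟨ρ, ρT, ρX1, ρX2, ρY1, ρY2⟩ := exists_algHom_of_pi (τ := τ)
    (p := ofLinearEquiv (inducedPi hq M)) (y₁ := ofLinearEquiv (inducedY1 q V))
    (y₂ := ofLinearEquiv (inducedY2 q V)) hq ht hT
    (Units.ext (commute_inducedPi_mul_self_inducedT hq _ hMN))
    (Units.ext (commute_inducedY1_inducedY2 q V))
    (by
      rw [mul_assoc, inv_mul_eq_iff_eq_mul]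
      exact Units.ext (inducedY1_mul_inducedT_sub hq _ N))
    (inducedPi_mul_inducedY1 hq M) (Units.ext (inducedPi_mul_inducedY2 hq M))
  refine ⟨ρ, fun v ↦ ?_, fun v ↦ ?_, fun v ↦ ?_, fun F z ↦ ?_, fun F z ↦ ?_⟩
  · rw [ρT]
    exact const_T v
  · rw [ρX1]
    change inducedT hq (t - t⁻¹) N (fun _ ↦ M v) - (t - t⁻¹) • (fun _ ↦ M v) = _
    rw [const_T]
    rfl
  · rw [ρX2]
    change inducedPi hq M (inducedT hq (t - t⁻¹) N fun _ ↦ v) = _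
    rw [const_T]
    rfl
  · rw [ρY1]
    rfl
  · rw [ρY2]
    rfl

end InducedRepresentation

section GenericRepresentation

open LinearMap

/-- The action of `T` on the fibre `ℂ × ℂ`, whose basis is a `T`-eigenvector `v₀` of eigenvalue `t`
on which `X₁ + X₂` and `X₁X₂` act by `u` and `v`, together with `X₁v₀`. -/
def fibreT (t u : ℂ) : Module.End ℂ (ℂ × ℂ) :=
  (t • fst ℂ ℂ ℂ + (t⁻¹ * u) • snd ℂ ℂ ℂ).prod (-t⁻¹ • snd ℂ ℂ ℂ)

/-- The action of `π = TX₁` on the fibre `ℂ × ℂ`, in the same basis `v₀, X₁v₀`. -/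
def fibrePi (t u v : ℂ) : Module.End ℂ (ℂ × ℂ) :=
  ((t⁻¹ * u) • fst ℂ ℂ ℂ + (t⁻¹ * u ^ 2 - t * v) • snd ℂ ℂ ℂ).prod
    (-t⁻¹ • fst ℂ ℂ ℂ - (t⁻¹ * u) • snd ℂ ℂ ℂ)

theorem fibreT_apply (t u : ℂ) (x : ℂ × ℂ) :
    fibreT t u x = (t * x.1 + t⁻¹ * u * x.2, -t⁻¹ * x.2) :=
  rfl

theorem fibrePi_apply (t u v : ℂ) (x : ℂ × ℂ) : fibrePi t u v x =
    (t⁻¹ * u * x.1 + (t⁻¹ * u ^ 2 - t * v) * x.2, -t⁻¹ * x.1 - t⁻¹ * u * x.2) :=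
  rfl

theorem fibreT_mul_fibreT (ht : t ≠ 0) (u : ℂ) :
    fibreT t u * fibreT t u = 1 + (t - t⁻¹) • fibreT t u := by
  refine LinearMap.ext fun x ↦ ?_
  change fibreT t u (fibreT t u x) = x + (t - t⁻¹) • fibreT t u x
  simp only [fibreT_apply]
  ext <;> simp only [Prod.fst_add, Prod.snd_add, Prod.smul_fst, Prod.smul_snd, smul_eq_mul] <;>
    field_simp <;> ring

theorem fibrePi_mul_fibrePi (ht : t ≠ 0) (u v : ℂ) :
    fibrePi t u v * fibrePi t u v = v • 1 := by
  refine LinearMap.ext fun x ↦ ?_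
  change fibrePi t u v (fibrePi t u v x) = v • x
  simp only [fibrePi_apply]
  ext <;> simp only [Prod.smul_fst, Prod.smul_snd, smul_eq_mul] <;> field_simp <;> ring

theorem exists_genericRep (hq : q ≠ 0) (ht : t ≠ 0) (u : ℂ) {v : ℂ} (hv : v ≠ 0) :
    ∃ ρ : DAHA q t →ₐ[ℂ] Module.End ℂ (GenericPoint q → ℂ × ℂ),
      ρ 𝐓 (fun _ ↦ (1, 0)) = t • (fun _ ↦ (1, 0)) ∧
      ρ 𝐗₁ (fun _ ↦ (1, 0)) = (fun _ ↦ (0, 1)) ∧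
      ρ 𝐗₂ (fun _ ↦ (1, 0)) = (fun _ ↦ (u, -1)) ∧
      ρ 𝐗₁ (fun _ ↦ (u, -1)) = v • (fun _ ↦ (1, 0)) ∧
      (∀ F z, ρ 𝐘₁ F z = z.a • F z) ∧ ∀ F z, ρ 𝐘₂ F z = z.b • F z := by
  have hM := fibrePi_mul_fibrePi ht u v
  let M : (ℂ × ℂ) ≃ₗ[ℂ] ℂ × ℂ := .ofLinearMap (fibrePi t u v) (v⁻¹ • fibrePi t u v)
    (by rw [comp_smul, ← Module.End.mul_eq_comp, hM, inv_smul_smul₀ hv]; rfl)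
    (by rw [smul_comp, ← Module.End.mul_eq_comp, hM, inv_smul_smul₀ hv]; rfl)
  have M_M (x : ℂ × ℂ) : M (M x) = v • x := LinearMap.congr_fun hM x
  obtain ⟨ρ, ρT, ρX1, ρX2, ρY⟩ := exists_inducedRep (M := M) hq ht (fibreT_mul_fibreT ht u)
    fun x ↦ by rw [M_M, M_M, map_smul]
  refine ⟨ρ, (ρT _).trans ?_, (ρX1 _).trans ?_, (ρX2 _).trans ?_, (ρX1 _).trans ?_, ρY⟩
  all_goals
    funext z
    simp only [M, LinearEquiv.coe_ofLinearMap, fibreT_apply, fibrePi_apply, Pi.smul_apply]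
    ext <;> simp only [Prod.fst_sub, Prod.snd_sub, Prod.smul_fst, Prod.smul_snd, smul_eq_mul] <;>
      field_simp <;> ring

end GenericRepresentation

end DAHA

namespace AlgA

variable {q t : ℂ}

local notation "𝐏₁" => P1 q t
local notation "𝐏₂" => P2 q t
local notation "𝐏₂⁻¹" => P2i q t
local notation "𝐐₁" => Q1 q t
local notation "𝐐₂" => Q2 q t
local notation "𝐐₂⁻¹" => Q2i q t
local notation "𝐑" => R q t

section Relations

theorem P2_mul_P2i : 𝐏₂ * 𝐏₂⁻¹ = 1 := by
  simpa only [P2, P2i, map_mul, map_one] using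
    RingQuot.mkAlgHom_rel ℂ (ARel.P2P2i (q := q) (t := t))

theorem P2i_mul_P2 : 𝐏₂⁻¹ * 𝐏₂ = 1 := by
  simpa only [P2, P2i, map_mul, map_one] using
    RingQuot.mkAlgHom_rel ℂ (ARel.P2iP2 (q := q) (t := t))

theorem Q2_mul_Q2i : 𝐐₂ * 𝐐₂⁻¹ = 1 := by
  simpa only [Q2, Q2i, map_mul, map_one] using
    RingQuot.mkAlgHom_rel ℂ (ARel.Q2Q2i (q := q) (t := t))

theorem Q2i_mul_Q2 : 𝐐₂⁻¹ * 𝐐₂ = 1 := by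
  simpa only [Q2, Q2i, map_mul, map_one] using
    RingQuot.mkAlgHom_rel ℂ (ARel.Q2iQ2 (q := q) (t := t))

theorem commute_P2_P1 : Commute 𝐏₂ 𝐏₁ := by
  simpa only [commute_iff_eq, P1, P2, map_mul] using
    RingQuot.mkAlgHom_rel ℂ (ARel.P2P1 (q := q) (t := t))

theorem commute_Q2_Q1 : Commute 𝐐₂ 𝐐₁ := by
  simpa only [commute_iff_eq, Q1, Q2, map_mul] using
    RingQuot.mkAlgHom_rel ℂ (ARel.Q2Q1 (q := q) (t := t))

theorem P2_mul_Q2 : 𝐏₂ * 𝐐₂ = q⁻¹ ^ 4 • (𝐐₂ * 𝐏₂) := by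
  simpa only [P2, Q2, map_mul, map_smul] using
    RingQuot.mkAlgHom_rel ℂ (ARel.P2Q2 (q := q) (t := t))

theorem P2_mul_Q1 : 𝐏₂ * 𝐐₁ = q⁻¹ ^ 2 • (𝐐₁ * 𝐏₂) := by
  simpa only [P2, Q1, map_mul, map_smul] using
    RingQuot.mkAlgHom_rel ℂ (ARel.P2Q1 (q := q) (t := t))

theorem P1_mul_Q2 : 𝐏₁ * 𝐐₂ = q⁻¹ ^ 2 • (𝐐₂ * 𝐏₁) := by
  simpa only [P1, Q2, map_mul, map_smul] using
    RingQuot.mkAlgHom_rel ℂ (ARel.P1Q2 (q := q) (t := t))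

theorem P1_mul_Q1 : 𝐏₁ * 𝐐₁ = 𝐐₁ * 𝐏₁ + (q⁻¹ ^ 2 - 1) • 𝐑 := by
  simpa only [P1, Q1, R, map_mul, map_add, map_smul] using
    RingQuot.mkAlgHom_rel ℂ (ARel.P1Q1 (q := q) (t := t))

theorem P2_mul_R : 𝐏₂ * 𝐑 = q⁻¹ ^ 2 • (𝐑 * 𝐏₂) := by
  simpa only [P2, R, map_mul, map_smul] using
    RingQuot.mkAlgHom_rel ℂ (ARel.P2R (q := q) (t := t))

theorem R_mul_Q2 : 𝐑 * 𝐐₂ = q⁻¹ ^ 2 • (𝐐₂ * 𝐑) := by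
  simpa only [Q2, R, map_mul, map_smul] using
    RingQuot.mkAlgHom_rel ℂ (ARel.RQ2 (q := q) (t := t))

theorem P1_mul_R : 𝐏₁ * 𝐑 = q⁻¹ ^ 2 • (𝐑 * 𝐏₁) + (1 - q⁻¹ ^ 2) • (𝐐₁ * 𝐏₂) := by
  simpa only [P1, P2, Q1, R, map_mul, map_add, map_smul] using
    RingQuot.mkAlgHom_rel ℂ (ARel.P1R (q := q) (t := t))

theorem R_mul_Q1 : 𝐑 * 𝐐₁ = q⁻¹ ^ 2 • (𝐐₁ * 𝐑) + (1 - q⁻¹ ^ 2) • (𝐐₂ * 𝐏₁) := by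
  simpa only [P1, Q1, Q2, R, map_mul, map_add, map_smul] using
    RingQuot.mkAlgHom_rel ℂ (ARel.RQ1 (q := q) (t := t))

theorem R_mul_R : 𝐑 * 𝐑 = ((1 + t ^ 2) * (q⁻¹ ^ 2 + t⁻¹ ^ 2)) • (𝐐₂ * 𝐏₂) -
    q⁻¹ ^ 2 • (𝐐₂ * 𝐏₁ * 𝐏₁) - q⁻¹ ^ 2 • (𝐐₁ * 𝐐₁ * 𝐏₂) + q⁻¹ ^ 2 • (𝐐₁ * 𝐑 * 𝐏₁) := by
  simpa only [P1, P2, Q1, Q2, R, map_mul, map_add, map_sub, map_smul] using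
    RingQuot.mkAlgHom_rel ℂ (ARel.RR (q := q) (t := t))

theorem P2_mul_Q2i (hq : q ≠ 0) : 𝐏₂ * 𝐐₂⁻¹ = (q⁻¹ ^ 4)⁻¹ • (𝐐₂⁻¹ * 𝐏₂) :=
  mul_inv_eq_smul_of_mul_eq_smul (pow_ne_zero 4 (inv_ne_zero hq)) Q2_mul_Q2i Q2i_mul_Q2 P2_mul_Q2

theorem P1_mul_Q2i (hq : q ≠ 0) : 𝐏₁ * 𝐐₂⁻¹ = (q⁻¹ ^ 2)⁻¹ • (𝐐₂⁻¹ * 𝐏₁) :=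
  mul_inv_eq_smul_of_mul_eq_smul (pow_ne_zero 2 (inv_ne_zero hq)) Q2_mul_Q2i Q2i_mul_Q2 P1_mul_Q2

theorem R_mul_Q2i (hq : q ≠ 0) : 𝐑 * 𝐐₂⁻¹ = (q⁻¹ ^ 2)⁻¹ • (𝐐₂⁻¹ * 𝐑) :=
  mul_inv_eq_smul_of_mul_eq_smul (pow_ne_zero 2 (inv_ne_zero hq)) Q2_mul_Q2i Q2i_mul_Q2 R_mul_Q2

theorem P2i_mul_Q2 (hq : q ≠ 0) : 𝐏₂⁻¹ * 𝐐₂ = (q⁻¹ ^ 4)⁻¹ • (𝐐₂ * 𝐏₂⁻¹) :=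
  inv_mul_eq_smul_of_mul_eq_smul (pow_ne_zero 4 (inv_ne_zero hq)) P2_mul_P2i P2i_mul_P2 P2_mul_Q2

theorem P2i_mul_Q1 (hq : q ≠ 0) : 𝐏₂⁻¹ * 𝐐₁ = (q⁻¹ ^ 2)⁻¹ • (𝐐₁ * 𝐏₂⁻¹) :=
  inv_mul_eq_smul_of_mul_eq_smul (pow_ne_zero 2 (inv_ne_zero hq)) P2_mul_P2i P2i_mul_P2 P2_mul_Q1

theorem P2i_mul_Q2i (hq : q ≠ 0) : 𝐏₂⁻¹ * 𝐐₂⁻¹ = (q⁻¹ ^ 4)⁻¹⁻¹ • (𝐐₂⁻¹ * 𝐏₂⁻¹) :=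
  inv_mul_eq_smul_of_mul_eq_smul (inv_ne_zero (pow_ne_zero 4 (inv_ne_zero hq))) P2_mul_P2i
    P2i_mul_P2 (P2_mul_Q2i hq)

theorem P2i_mul_R (hq : q ≠ 0) : 𝐏₂⁻¹ * 𝐑 = (q⁻¹ ^ 2)⁻¹ • (𝐑 * 𝐏₂⁻¹) :=
  inv_mul_eq_smul_of_mul_eq_smul (pow_ne_zero 2 (inv_ne_zero hq)) P2_mul_P2i P2i_mul_P2 P2_mul_R

end Relations

section Spanning

open Algebra Submodule

variable (q t) in
/-- The subalgebra of `𝒜` generated by `P₁` and `P₂^{±1}`. -/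
def subalgebraP : Subalgebra ℂ (AlgA q t) := adjoin ℂ {𝐏₁, 𝐏₂, 𝐏₂⁻¹}

variable (q t) in
/-- The subalgebra of `𝒜` generated by `Q₁` and `Q₂^{±1}`. -/
def subalgebraQ : Subalgebra ℂ (AlgA q t) := adjoin ℂ {𝐐₁, 𝐐₂, 𝐐₂⁻¹}

theorem P1_mem : 𝐏₁ ∈ subalgebraP q t := subset_adjoin (by simp)

theorem P2_mem : 𝐏₂ ∈ subalgebraP q t := subset_adjoin (by simp)

theorem P2i_mem : 𝐏₂⁻¹ ∈ subalgebraP q t := subset_adjoin (by simp)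

theorem Q1_mem : 𝐐₁ ∈ subalgebraQ q t := subset_adjoin (by simp)

theorem Q2_mem : 𝐐₂ ∈ subalgebraQ q t := subset_adjoin (by simp)

theorem Q2i_mem : 𝐐₂⁻¹ ∈ subalgebraQ q t := subset_adjoin (by simp)

theorem adjoin_R_P_Q : adjoin ℂ ({1, 𝐑, 𝐏₁, 𝐏₂, 𝐏₂⁻¹} ∪ {𝐐₁, 𝐐₂, 𝐐₂⁻¹} : Set (AlgA q t)) = ⊤ := by
  rw [← top_le_iff, ← adjoin_range_mkAlgHom_ι, adjoin_le_iff]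
  rintro _ ⟨x, rfl⟩
  refine subset_adjoin ?_
  cases x
  case P1 => exact .inl (.inr (.inr (.inl rfl)))
  case P2 => exact .inl (.inr (.inr (.inr (.inl rfl))))
  case P2i => exact .inl (.inr (.inr (.inr (.inr rfl))))
  case Q1 => exact .inr (.inl rfl)
  case Q2 => exact .inr (.inr (.inl rfl))
  case Q2i => exact .inr (.inr (.inr rfl))
  case R => exact .inl (.inr (.inl rfl))

theorem mul_Q_mem (hq : q ≠ 0) {g s : AlgA q t} (hg : g ∈ ({1, 𝐑, 𝐏₁, 𝐏₂, 𝐏₂⁻¹} : Set _))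
    (hs : s ∈ ({𝐐₁, 𝐐₂, 𝐐₂⁻¹} : Set _)) :
    g * s ∈ (subalgebraQ q t).toSubmodule * span ℂ {1, 𝐑, 𝐏₁, 𝐏₂, 𝐏₂⁻¹} := by
  have mul_mem {y g : AlgA q t} (hy : y ∈ subalgebraQ q t)
      (hg : g ∈ ({1, 𝐑, 𝐏₁, 𝐏₂, 𝐏₂⁻¹} : Set _)) :
      y * g ∈ (subalgebraQ q t).toSubmodule * span ℂ {1, 𝐑, 𝐏₁, 𝐏₂, 𝐏₂⁻¹} :=
    mul_mem_mul hy (subset_span hg)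
  obtain rfl | rfl | rfl | rfl | rfl := hg
  · rw [one_mul, ← mul_one s]
    exact mul_mem (subset_adjoin hs) (by simp)
  all_goals obtain rfl | rfl | rfl := hs
  · rw [R_mul_Q1]
    exact add_mem (smul_mem _ _ (mul_mem Q1_mem (by simp)))
      (smul_mem _ _ (mul_mem Q2_mem (by simp)))
  · rw [R_mul_Q2]
    exact smul_mem _ _ (mul_mem Q2_mem (by simp))
  · rw [R_mul_Q2i hq]
    exact smul_mem _ _ (mul_mem Q2i_mem (by simp))
  · have R_mem := mul_mem (one_mem _) (Set.mem_insert_of_mem 1 (Set.mem_insert 𝐑 _))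
    rw [one_mul] at R_mem
    rw [P1_mul_Q1]
    exact add_mem (mul_mem Q1_mem (by simp)) (smul_mem _ _ R_mem)
  · rw [P1_mul_Q2]
    exact smul_mem _ _ (mul_mem Q2_mem (by simp))
  · rw [P1_mul_Q2i hq]
    exact smul_mem _ _ (mul_mem Q2i_mem (by simp))
  · rw [P2_mul_Q1]
    exact smul_mem _ _ (mul_mem Q1_mem (by simp))
  · rw [P2_mul_Q2]
    exact smul_mem _ _ (mul_mem Q2_mem (by simp))
  · rw [P2_mul_Q2i hq]
    exact smul_mem _ _ (mul_mem Q2i_mem (by simp))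
  · rw [P2i_mul_Q1 hq]
    exact smul_mem _ _ (mul_mem Q1_mem (by simp))
  · rw [P2i_mul_Q2 hq]
    exact smul_mem _ _ (mul_mem Q2_mem (by simp))
  · rw [P2i_mul_Q2i hq]
    exact smul_mem _ _ (mul_mem Q2i_mem (by simp))

variable (q t) in
/-- The span of the products `fvg` with `f` in `subalgebraQ`, `v ∈ {1, R}` and `g` in `subalgebraP`;
by `triangular_eq_top` it is all of `𝒜`. -/
def triangular : Submodule ℂ (AlgA q t) :=
  (subalgebraQ q t).toSubmodule * (span ℂ {1, 𝐑} * (subalgebraP q t).toSubmodule)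

theorem mul_mul_mem_triangular {f v g : AlgA q t} (hf : f ∈ subalgebraQ q t)
    (hv : v ∈ ({1, 𝐑} : Set _)) (hg : g ∈ subalgebraP q t) : f * (v * g) ∈ triangular q t :=
  mul_mem_mul hf (mul_mem_mul (subset_span hv) hg)

theorem mul_mem_triangular {f g : AlgA q t} (hf : f ∈ subalgebraQ q t)
    (hg : g ∈ subalgebraP q t) : f * g ∈ triangular q t := by
  simpa only [one_mul] using mul_mul_mem_triangular hf (Set.mem_insert 1 _) hg

theorem R_mul_mem_triangular {g : AlgA q t} (hg : g ∈ subalgebraP q t) :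
    𝐑 * g ∈ triangular q t := by
  simpa only [one_mul] using
    mul_mul_mem_triangular (one_mem _) (Set.mem_insert_of_mem 1 rfl) hg

theorem mul_one_or_R_mem_triangular (hq : q ≠ 0) {g v : AlgA q t}
    (hg : g ∈ ({1, 𝐑, 𝐏₁, 𝐏₂, 𝐏₂⁻¹} : Set _)) (hv : v ∈ ({1, 𝐑} : Set _)) :
    g * v ∈ triangular q t := by
  have R_mem : 𝐑 ∈ triangular q t := mul_one 𝐑 ▸ R_mul_mem_triangular (one_mem _)
  obtain rfl | rfl := hv
  · rw [mul_one]
    obtain rfl | rfl | hg := hg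
    · exact one_mul (1 : AlgA q t) ▸ mul_mem_triangular (one_mem _) (one_mem _)
    · exact R_mem
    · exact one_mul g ▸ mul_mem_triangular (one_mem _) (subset_adjoin hg)
  obtain rfl | rfl | rfl | rfl | rfl := hg
  · rwa [one_mul]
  · rw [R_mul_R, mul_assoc 𝐐₂, mul_assoc 𝐐₁ 𝐑]
    refine add_mem (sub_mem (sub_mem ?_ ?_) ?_) ?_ <;> refine smul_mem _ _ ?_
    · exact mul_mem_triangular Q2_mem P2_mem
    · exact mul_mem_triangular Q2_mem (mul_mem P1_mem P1_mem)
    · exact mul_mem_triangular (mul_mem Q1_mem Q1_mem) P2_mem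
    · exact mul_mul_mem_triangular Q1_mem (Set.mem_insert_of_mem 1 rfl) P1_mem
  · rw [P1_mul_R]
    exact add_mem (smul_mem _ _ (R_mul_mem_triangular P1_mem))
      (smul_mem _ _ (mul_mem_triangular Q1_mem P2_mem))
  · rw [P2_mul_R]
    exact smul_mem _ _ (R_mul_mem_triangular P2_mem)
  · rw [P2i_mul_R hq]
    exact smul_mem _ _ (R_mul_mem_triangular P2i_mem)

theorem triangular_mul_subalgebraP :
    triangular q t * (subalgebraP q t).toSubmodule = triangular q t := by
  rw [triangular, mul_assoc, mul_assoc, (subalgebraP q t).isIdempotentElem_toSubmodule.eq]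

theorem triangular_eq_top (hq : q ≠ 0) : triangular q t = ⊤ := by
  refine adjoin_mul_eq_top adjoin_R_P_Q ?_ (fun g hg s hs ↦ mul_Q_mem hq hg hs) ?_
  · have one_mem : (1 : AlgA q t) * 1 ∈ span ℂ {1, 𝐑} * (subalgebraP q t).toSubmodule :=
      mul_mem_mul (subset_span (Set.mem_insert 1 _)) (one_mem (subalgebraP q t))
    rwa [mul_one] at one_mem
  change _ ≤ triangular q t
  rw [← mul_assoc, ← triangular_mul_subalgebraP, span_mul_span]
  refine mul_le_mul' (span_le.2 (Set.mul_subset_iff.2 ?_)) le_rfl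
  exact fun g hg v hv ↦ mul_one_or_R_mem_triangular hq hg hv

end Spanning

section Operators

open Algebra LinearMap

variable (q t) in
/-- The commuting operators on `𝒜` of left multiplication by `Q₁, Q₂` and of right multiplication
by `P₁, P₂`, over which `𝒜` is generated by `1` and `R` up to inverting `conjQP`. -/
def mulOperator : Fin 4 → Module.End ℂ (AlgA q t) :=
  ![mulLeft ℂ 𝐐₁, mulLeft ℂ 𝐐₂, mulRight ℂ 𝐏₁, mulRight ℂ 𝐏₂]

variable (q t) in
/-- The operator `w ↦ Q₂wP₂` on `𝒜`, invertible with inverse `conjQPInv`. -/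
def conjQP : Module.End ℂ (AlgA q t) := mulLeft ℂ 𝐐₂ * mulRight ℂ 𝐏₂

variable (q t) in
/-- The operator `w ↦ Q₂⁻¹wP₂⁻¹` on `𝒜`. -/
def conjQPInv : Module.End ℂ (AlgA q t) := mulLeft ℂ 𝐐₂⁻¹ * mulRight ℂ 𝐏₂⁻¹

theorem conjQP_mul_conjQPInv : conjQP q t * conjQPInv q t = 1 := by
  ext w
  simp [conjQP, conjQPInv, mul_assoc, P2i_mul_P2, mul_mul_eq_of_mul_eq Q2_mul_Q2i]

theorem conjQPInv_mul_conjQP : conjQPInv q t * conjQP q t = 1 := by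
  ext w
  simp [conjQP, conjQPInv, mul_assoc, P2_mul_P2i, mul_mul_eq_of_mul_eq Q2i_mul_Q2]

theorem conjQP_pow_injective (n : ℕ) : Function.Injective (conjQP q t ^ n) := by
  rw [Module.End.coe_pow]
  have : Function.LeftInverse (conjQPInv q t) (conjQP q t) :=
    LinearMap.congr_fun conjQPInv_mul_conjQP
  exact this.injective.iterate n

theorem commute_mulOperator (i j : Fin 4) : Commute (mulOperator q t i) (mulOperator q t j) := by
  have hQ : Commute (mulLeft ℂ 𝐐₂) (mulLeft ℂ 𝐐₁) := commute_Q2_Q1.map (lmul ℂ (AlgA q t))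
  have hP : Commute (mulRight ℂ 𝐏₂) (mulRight ℂ 𝐏₁) := by
    rw [commute_iff_eq, Module.End.mul_eq_comp, Module.End.mul_eq_comp, ← mulRight_mul,
      ← mulRight_mul, commute_P2_P1.eq]
  fin_cases i <;> fin_cases j <;>
    first
    | exact Commute.refl _
    | exact hQ
    | exact hQ.symm
    | exact hP
    | exact hP.symm
    | exact commute_mulLeft_right _ _
    | exact (commute_mulLeft_right _ _).symm

variable (q t) in
/-- The algebra generated by the operators `mulOperator` and by `conjQPInv`, that is, by the left
multiplications with elements of `subalgebraQ` and the right multiplications with elements of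
`subalgebraP`. -/
def operatorAlgebra : Subalgebra ℂ (Module.End ℂ (AlgA q t)) :=
  adjoin ℂ (insert (conjQPInv q t) (Set.range (mulOperator q t)))

theorem mulOperator_mem (i : Fin 4) : mulOperator q t i ∈ operatorAlgebra q t :=
  subset_adjoin (.inr ⟨i, rfl⟩)

theorem conjQPInv_mem : conjQPInv q t ∈ operatorAlgebra q t :=
  subset_adjoin (Set.mem_insert _ _)

theorem mulLeft_mem_operatorAlgebra {f : AlgA q t} (hf : f ∈ subalgebraQ q t) :
    mulLeft ℂ f ∈ operatorAlgebra q t := by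
  refine mulLeft_mem_of_mem_adjoin ?_ hf
  rintro _ (rfl | rfl | rfl)
  · exact mulOperator_mem 0
  · exact mulOperator_mem 1
  · have : mulLeft ℂ 𝐐₂⁻¹ = conjQPInv q t * mulOperator q t 3 := by
      ext w
      simp [conjQPInv, mulOperator, mul_assoc, P2_mul_P2i]
    rw [this]
    exact mul_mem conjQPInv_mem (mulOperator_mem 3)

theorem mulRight_mem_operatorAlgebra {g : AlgA q t} (hg : g ∈ subalgebraP q t) :
    mulRight ℂ g ∈ operatorAlgebra q t := by
  refine mulRight_mem_of_mem_adjoin ?_ hg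
  rintro _ (rfl | rfl | rfl)
  · exact mulOperator_mem 2
  · exact mulOperator_mem 3
  · have : mulRight ℂ 𝐏₂⁻¹ = conjQPInv q t * mulOperator q t 1 := by
      ext w
      simp [conjQPInv, mulOperator, mul_assoc, mul_mul_eq_of_mul_eq Q2i_mul_Q2]
    rw [this]
    exact mul_mem conjQPInv_mem (mulOperator_mem 1)

theorem exists_eq_apply_one_add_apply_R (hq : q ≠ 0) (w : AlgA q t) :
    ∃ a ∈ operatorAlgebra q t, ∃ b ∈ operatorAlgebra q t, w = a 1 + b 𝐑 := by
  let N : Submodule ℂ (AlgA q t) :=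
    (operatorAlgebra q t).toSubmodule.map (applyₗ 1) ⊔
      (operatorAlgebra q t).toSubmodule.map (applyₗ 𝐑)
  have triangular_le : triangular q t ≤ N := by
    refine Submodule.mul_le.2 fun f hf y hy ↦ ?_
    suffices Submodule.span ℂ {1, 𝐑} * (subalgebraP q t).toSubmodule ≤
        N.comap (mulLeft ℂ f) from this hy
    refine Submodule.mul_le.2 fun v hv g hg ↦ ?_
    obtain ⟨c, d, rfl⟩ := Submodule.mem_span_pair.1 hv
    have op_mem : mulLeft ℂ f * mulRight ℂ g ∈ operatorAlgebra q t :=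
      mul_mem (mulLeft_mem_operatorAlgebra hf) (mulRight_mem_operatorAlgebra hg)
    rw [Submodule.mem_comap, ← mulRight_apply ℂ g, ← Module.End.mul_apply, map_add, map_smul,
      map_smul]
    exact Submodule.add_mem_sup
      (Submodule.smul_mem _ c ⟨_, op_mem, rfl⟩) (Submodule.smul_mem _ d ⟨_, op_mem, rfl⟩)
  rw [triangular_eq_top hq, top_le_iff] at triangular_le
  obtain ⟨_, ⟨a, ha, rfl⟩, _, ⟨b, hb, rfl⟩, hw⟩ :=
    Submodule.mem_sup.1 (triangular_le ▸ Submodule.mem_top (x := w))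
  exact ⟨a, ha, b, hb, hw.symm⟩

theorem conjQP_mem_adjoin_range : conjQP q t ∈ adjoin ℂ (Set.range (mulOperator q t)) :=
  mul_mem (subset_adjoin ⟨1, rfl⟩) (subset_adjoin ⟨3, rfl⟩)

theorem exists_conjQP_pow_mul_mem {a : Module.End ℂ (AlgA q t)} (ha : a ∈ operatorAlgebra q t) :
    ∃ n : ℕ, conjQP q t ^ n * a ∈ adjoin ℂ (Set.range (mulOperator q t)) := by
  have comm (i : Fin 4) : Commute (conjQP q t) (mulOperator q t i) :=
    (commute_mulOperator 1 i).mul_left (commute_mulOperator 3 i)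
  refine exists_pow_mul_mem_adjoin conjQP_mem_adjoin_range conjQP_mul_conjQPInv ?_ ha
  rintro _ (rfl | ⟨i, rfl⟩)
  · exact conjQP_mul_conjQPInv.trans conjQPInv_mul_conjQP.symm
  · exact comm i

variable (q t) in
theorem exists_mvPolynomial_normal_form (hq : q ≠ 0) :
    ∃ φ : MvPolynomial (Fin 4) ℂ →ₐ[ℂ] Module.End ℂ (AlgA q t),
      (∀ i, φ (MvPolynomial.X i) = mulOperator q t i) ∧
      ∀ w, ∃ n f g, (conjQP q t ^ n) w = φ f 1 + φ g 𝐑 := by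
  obtain ⟨φ, φ_X, φ_range⟩ :=
    exists_mvPolynomial_algHom (K := ℂ) (commute_mulOperator (q := q) (t := t))
  refine ⟨φ, φ_X, fun w ↦ ?_⟩
  obtain ⟨a, ha, b, hb, rfl⟩ := exists_eq_apply_one_add_apply_R hq w
  obtain ⟨m, hm⟩ := exists_conjQP_pow_mul_mem ha
  obtain ⟨n, hn⟩ := exists_conjQP_pow_mul_mem hb
  replace hm : conjQP q t ^ (n + m) * a ∈ φ.range := by
    rw [φ_range, pow_add, mul_assoc]
    exact mul_mem (pow_mem conjQP_mem_adjoin_range n) hm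
  replace hn : conjQP q t ^ (n + m) * b ∈ φ.range := by
    rw [φ_range, pow_add, pow_mul_comm, mul_assoc]
    exact mul_mem (pow_mem conjQP_mem_adjoin_range m) hn
  obtain ⟨f, hf⟩ := hm
  obtain ⟨g, hg⟩ := hn
  refine ⟨n + m, f, g, ?_⟩
  rw [map_add]
  exact congrArg₂ (· + ·) (LinearMap.congr_fun hf.symm 1) (LinearMap.congr_fun hg.symm 𝐑)

end Operators

end AlgA

section SymmetricPolynomials

open MvPolynomial

theorem dense_setOf_generic (q c b : ℂ) :
    Dense {a : ℂ | a ≠ 0 ∧ a ≠ c * b ∧ ∀ k : ℤ, a ≠ (q ^ 2) ^ k * b} := by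
  have countable : (insert 0 (insert (c * b) (Set.range fun k : ℤ ↦ (q ^ 2) ^ k * b))).Countable :=
    ((Set.countable_range _).insert _).insert _
  convert countable.dense_compl ℝ using 1
  ext a
  simp only [Set.mem_ofPred_eq, Set.mem_compl_iff, Set.mem_insert_iff, Set.mem_range, not_or,
    not_exists, ne_comm (a := a), ne_eq]

theorem eq_zero_of_eval_symmetric_eq_zero {g : MvPolynomial (Fin 4) ℂ}
    (hg : ∀ a b u v : ℂ, b ≠ 0 → v ≠ 0 → eval ![a + b, a * b, u, v] g = 0) : g = 0 := by
  refine funext_set (fun i ↦ if i = 1 ∨ i = 3 then {0}ᶜ else Set.univ) (fun i ↦ ?_) fun x hx ↦ ?_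
  · split_ifs
    exacts [(Set.finite_singleton 0).infinite_compl, Set.infinite_univ]
  have x₁_ne_zero : x 1 ≠ 0 := by simpa using hx 1 (Set.mem_univ _)
  have x₃_ne_zero : x 3 ≠ 0 := by simpa using hx 3 (Set.mem_univ _)
  obtain ⟨d, hd⟩ := IsAlgClosed.exists_pow_nat_eq (x 0 ^ 2 - 4 * x 1) two_pos
  have sum_roots : (x 0 + d) / 2 + (x 0 - d) / 2 = x 0 := by ring
  have prod_roots : (x 0 + d) / 2 * ((x 0 - d) / 2) = x 1 := by linear_combination -hd / 4
  have x_eq : x = ![x 0, x 1, x 2, x 3] := by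
    ext i
    fin_cases i <;> rfl
  rw [map_zero, x_eq, ← sum_roots, ← prod_roots]
  refine hg _ _ _ _ (fun h ↦ x₁_ne_zero ?_) x₃_ne_zero
  rw [← prod_roots, h, mul_zero]

theorem eq_zero_of_eval_genericPoint_eq_zero (q c : ℂ) {g : MvPolynomial (Fin 4) ℂ}
    (hg : ∀ z : DAHA.GenericPoint q, z.a ≠ c * z.b → ∀ u v : ℂ, v ≠ 0 →
      eval ![z.a + z.b, z.a * z.b, u, v] g = 0) : g = 0 := by
  refine eq_zero_of_eval_symmetric_eq_zero fun a b u v hb hv ↦ ?_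
  have cont : Continuous fun a ↦ eval ![a + b, a * b, u, v] g := by
    refine (continuous_eval g).comp (continuous_pi fun i ↦ ?_)
    fin_cases i
    exacts [continuous_id.add continuous_const, continuous_id.mul continuous_const,
      continuous_const, continuous_const]
  refine congrFun (cont.ext_on (dense_setOf_generic q c b) (continuous_const (y := 0)) ?_) a
  rintro a ⟨ha, hac, hab⟩
  exact hg ⟨a, b, ha, hb, hab⟩ hac u v hv

end SymmetricPolynomials

namespace DAHA

variable {q t : ℂ}

section SphericalMap

/-- `sphericalHom` viewed as a linear map into the whole of `H`. -/
def sphericalMap (hq : q ≠ 0) (ht : t ≠ 0) (ht2 : t ^ 2 ≠ -1) : AlgA q t →ₗ[ℂ] DAHA q t where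
  toFun w := (sphericalHom hq ht ht2 w).val
  map_add' w w' := by rw [map_add]; rfl
  map_smul' c w := by
    rw [map_smul, Algebra.smul_def]
    change c • eSym q t * _ = _
    rw [smul_mul_assoc, ((Subsemigroup.mem_corner_iff (isIdempotentElem_eSym ht ht2)).1
      (sphericalHom hq ht ht2 w).2).1]
    rfl

variable (hq : q ≠ 0) (ht : t ≠ 0) (ht2 : t ^ 2 ≠ -1)

theorem sphericalMap_one : sphericalMap hq ht ht2 1 = eSym q t :=
  congrArg Subtype.val (map_one (sphericalHom hq ht ht2))

theorem sphericalMap_mul (w w' : AlgA q t) :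
    sphericalMap hq ht ht2 (w * w') = sphericalMap hq ht ht2 w * sphericalMap hq ht ht2 w' :=
  congrArg Subtype.val (map_mul (sphericalHom hq ht ht2) w w')

theorem sphericalMap_gen (x : AGen) :
    sphericalMap hq ht ht2 (RingQuot.mkAlgHom ℂ (ARel q t) (gA x)) =
      sphericalGen q t x * eSym q t :=
  coe_sphericalHom_gen hq ht ht2 x

theorem sphericalMap_gen_mul (x : AGen) (w : AlgA q t) :
    sphericalMap hq ht ht2 (RingQuot.mkAlgHom ℂ (ARel q t) (gA x) * w) =
      sphericalGen q t x * sphericalMap hq ht ht2 w := by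
  rw [sphericalMap_mul, sphericalMap_gen, mul_assoc]
  exact congrArg _ ((Subsemigroup.mem_corner_iff (isIdempotentElem_eSym ht ht2)).1
    (sphericalHom hq ht ht2 w).2).1

theorem range_sphericalMap :
    Set.range (sphericalMap hq ht ht2) = {x | ∃ y, x = eSym q t * y * eSym q t} := by
  ext x
  constructor
  · rintro ⟨w, rfl⟩
    obtain ⟨y, hy⟩ := (sphericalHom hq ht ht2 w).2
    exact ⟨y, hy.symm⟩
  · rintro ⟨y, rfl⟩
    obtain ⟨w, hw⟩ := sphericalHom_surjective hq ht ht2 ⟨_, y, rfl⟩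
    exact ⟨w, congrArg Subtype.val hw⟩

theorem apply_eSym_of_apply_T {V : Type*} [AddCommGroup V] [Module ℂ V]
    {ρ : DAHA q t →ₐ[ℂ] Module.End ℂ V} {v : V} (ht2 : t ^ 2 ≠ -1) (hv : ρ (T q t) v = t • v) :
    ρ (eSym q t) v = v := by
  have : v + (t * t) • v = (1 + t ^ 2) • v := by module
  rw [eSym, map_smul, map_add, map_one, map_smul, LinearMap.smul_apply, LinearMap.add_apply,
    LinearMap.smul_apply, hv, Module.End.one_apply, smul_smul, this,
    inv_smul_smul₀ (one_add_sq_ne_zero ht2)]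

/-- The component at `z` of the vector obtained by applying the image of `w` to `v₀`, as a linear
function of `w`. -/
def matrixCoeff (ρ : DAHA q t →ₐ[ℂ] Module.End ℂ (GenericPoint q → ℂ × ℂ))
    (v₀ : GenericPoint q → ℂ × ℂ) (z : GenericPoint q) : AlgA q t →ₗ[ℂ] ℂ × ℂ :=
  LinearMap.proj z ∘ₗ LinearMap.applyₗ v₀ ∘ₗ ρ.toLinearMap ∘ₗ sphericalMap hq ht ht2

section MatrixCoeff

variable {hq ht ht2} {ρ : DAHA q t →ₐ[ℂ] Module.End ℂ (GenericPoint q → ℂ × ℂ)}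
  {v₀ : GenericPoint q → ℂ × ℂ} {z : GenericPoint q}

theorem matrixCoeff_apply (w : AlgA q t) :
    matrixCoeff hq ht ht2 ρ v₀ z w = ρ (sphericalMap hq ht ht2 w) v₀ z :=
  rfl

theorem matrixCoeff_gen_mul (x : AGen) (w : AlgA q t) :
    matrixCoeff hq ht ht2 ρ v₀ z (RingQuot.mkAlgHom ℂ (ARel q t) (gA x) * w) =
      ρ (sphericalGen q t x) (ρ (sphericalMap hq ht ht2 w) v₀) z := by
  rw [matrixCoeff_apply, sphericalMap_gen_mul, map_mul, Module.End.mul_apply]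

theorem matrixCoeff_mul_gen (hv₀ : ρ (eSym q t) v₀ = v₀) {x : AGen} {c : ℂ}
    (hx : ρ (sphericalGen q t x) v₀ = c • v₀) (w : AlgA q t) :
    matrixCoeff hq ht ht2 ρ v₀ z (w * RingQuot.mkAlgHom ℂ (ARel q t) (gA x)) =
      c • matrixCoeff hq ht ht2 ρ v₀ z w := by
  rw [matrixCoeff_apply, sphericalMap_mul, sphericalMap_gen, map_mul, map_mul,
    Module.End.mul_apply, Module.End.mul_apply, hv₀, hx, map_smul]
  rfl

end MatrixCoeff

theorem exists_linearMap_of_genericPoint (z : GenericPoint q) (u : ℂ) {v : ℂ} (hv : v ≠ 0) :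
    ∃ L : AlgA q t →ₗ[ℂ] ℂ × ℂ,
      (∀ w, sphericalMap hq ht ht2 w = 0 → L w = 0) ∧
      (∀ i w, L (AlgA.mulOperator q t i w) = ![z.a + z.b, z.a * z.b, u, v] i • L w) ∧
      L 1 = (1, 0) ∧ L (R q t) = (t⁻¹ ^ 2 * (z.b * u), z.a - t⁻¹ ^ 2 * z.b) := by
  obtain ⟨ρ, ρT, ρX1, ρX2, ρX1X2, ρY1, ρY2⟩ := exists_genericRep hq ht u hv
  set v₀ : GenericPoint q → ℂ × ℂ := fun _ ↦ (1, 0)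
  have ρe : ρ (eSym q t) v₀ = v₀ := apply_eSym_of_apply_T ht2 ρT
  refine ⟨matrixCoeff hq ht ht2 ρ v₀ z, fun w hw ↦ ?_, fun i w ↦ ?_, ?_, ?_⟩
  · rw [matrixCoeff_apply, hw, map_zero]
    rfl
  · fin_cases i
    · refine (matrixCoeff_gen_mul .Q1 w).trans ?_
      rw [sphericalGen, map_add, LinearMap.add_apply, Pi.add_apply, ρY1, ρY2, ← add_smul]
      rfl
    · refine (matrixCoeff_gen_mul .Q2 w).trans ?_
      rw [sphericalGen, map_mul, Module.End.mul_apply, ρY1, ρY2, ← mul_smul]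
      rfl
    · refine matrixCoeff_mul_gen (x := .P1) ρe ?_ w
      rw [sphericalGen, map_add, LinearMap.add_apply, ρX1, ρX2]
      ext <;> simp [v₀]
    · refine matrixCoeff_mul_gen (x := .P2) ρe ?_ w
      rw [sphericalGen, map_mul, Module.End.mul_apply, ρX2, ρX1X2]
      rfl
  · rw [matrixCoeff_apply, sphericalMap_one, ρe]
  · have S_R : sphericalMap hq ht ht2 (R q t) = symR q t * eSym q t := sphericalMap_gen hq ht ht2 .R
    rw [matrixCoeff_apply, S_R, symR_mul_eSym ht]
    simp only [map_add, map_mul, map_smul, LinearMap.add_apply, LinearMap.smul_apply,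
      Pi.add_apply, Pi.smul_apply, Module.End.mul_apply, ρe, ρX1, ρX2, ρY1, ρY2]
    ext <;> simp [sub_eq_add_neg]

open MvPolynomial in
theorem sphericalMap_injective : Function.Injective (sphericalMap hq ht ht2) := by
  refine (injective_iff_map_eq_zero _).2 fun w hw ↦ ?_
  obtain ⟨φ, φ_X, normal_form⟩ := AlgA.exists_mvPolynomial_normal_form q t hq
  obtain ⟨n, f, g, hfg⟩ := normal_form w
  have conjQP_pow : AlgA.conjQP q t ^ n = φ ((X 1 * X 3) ^ n) := by
    rw [map_pow, map_mul, φ_X, φ_X]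
    rfl
  have eval_eq_zero (z : GenericPoint q) (u : ℂ) {v : ℂ} (hv : v ≠ 0) :
      eval ![z.a + z.b, z.a * z.b, u, v] f • ((1, 0) : ℂ × ℂ) +
        eval ![z.a + z.b, z.a * z.b, u, v] g •
          (t⁻¹ ^ 2 * (z.b * u), z.a - t⁻¹ ^ 2 * z.b) = 0 := by
    obtain ⟨L, L_ker, L_op, L_one, L_R⟩ := exists_linearMap_of_genericPoint hq ht ht2 z u hv
    have L_φ := map_mvPolynomial_apply (φ := φ) (L := L) fun i w ↦ by rw [φ_X]; exact L_op i w
    rw [← L_one, ← L_R, ← L_φ, ← L_φ, ← map_add, ← hfg, conjQP_pow, L_φ, L_ker w hw, smul_zero]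
  have g_eq_zero : g = 0 := by
    refine eq_zero_of_eval_genericPoint_eq_zero q (t⁻¹ ^ 2) fun z hz u v hv ↦ ?_
    have snd_eq : _ * (0 : ℂ) + _ * (z.a - t⁻¹ ^ 2 * z.b) = 0 :=
      congrArg Prod.snd (eval_eq_zero z u hv)
    rw [mul_zero, zero_add] at snd_eq
    exact (mul_eq_zero.1 snd_eq).resolve_right (sub_ne_zero.2 hz)
  have f_eq_zero : f = 0 := by
    refine eq_zero_of_eval_genericPoint_eq_zero q (t⁻¹ ^ 2) fun z _ u v hv ↦ ?_
    have fst_eq := congrArg Prod.fst (eval_eq_zero z u hv)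
    simpa [g_eq_zero] using fst_eq
  rw [f_eq_zero, g_eq_zero, map_zero, LinearMap.zero_apply, LinearMap.zero_apply, add_zero] at hfg
  exact AlgA.conjQP_pow_injective n (hfg.trans (map_zero _).symm)

end SphericalMap

end DAHA

/-- There is a ℂ-algebra isomorphism `Φ` from `𝒜` onto the spherical
double affine Hecke algebra `eH_{t,q}e`, determined on generators by
`Φ(P₁) = e(X₁+X₂)e`, `Φ(P₂) = e(X₁X₂)e`, `Φ(Q₁) = e(Y₁+Y₂)e`, `Φ(Q₂) = e(Y₁Y₂)e`,
`Φ(R) = e(t⁻²Y₁X₁ + Y₂X₂)e`.  (Since the unit of `eH_{t,q}e` is `e` rather than the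
unit of `H_{t,q}`, the map is formalized as a multiplicative ℂ-linear map with
`Φ(1) = e`, injective, and with image exactly `eH_{t,q}e = {e·y·e : y ∈ H_{t,q}}`.) -/
theorem stmt3 (q t : ℂ) (hq : q ≠ 0) (ht : t ≠ 0) (ht2 : t ^ 2 ≠ -1) :
    ∃ Φ : AlgA q t →ₗ[ℂ] DAHA q t,
      (∀ x y : AlgA q t, Φ (x * y) = Φ x * Φ y) ∧
      Φ 1 = eSym q t ∧
      Function.Injective Φ ∧
      Set.range Φ = {x : DAHA q t | ∃ y : DAHA q t, x = eSym q t * y * eSym q t} ∧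
      Φ (P1 q t) = eSym q t * (X1 q t + X2 q t) * eSym q t ∧
      Φ (P2 q t) = eSym q t * (X1 q t * X2 q t) * eSym q t ∧
      Φ (Q1 q t) = eSym q t * (Y1 q t + Y2 q t) * eSym q t ∧
      Φ (Q2 q t) = eSym q t * (Y1 q t * Y2 q t) * eSym q t ∧
      Φ (R q t) = eSym q t * ((t⁻¹ ^ 2) • (Y1 q t * X1 q t) + Y2 q t * X2 q t) * eSym q t := by
  have S_gen := DAHA.sphericalMap_gen hq ht ht2
  have sandwich (x : AGen) :=
    DAHA.eSym_mul_mul_eSym_of_commute_T ht ht2 (DAHA.commute_T_sphericalGen (q := q) ht x)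
  exact ⟨DAHA.sphericalMap hq ht ht2, DAHA.sphericalMap_mul hq ht ht2,
    DAHA.sphericalMap_one hq ht ht2, DAHA.sphericalMap_injective hq ht ht2,
    DAHA.range_sphericalMap hq ht ht2, (S_gen .P1).trans (sandwich .P1).symm,
    (S_gen .P2).trans (sandwich .P2).symm, (S_gen .Q1).trans (sandwich .Q1).symm,
    (S_gen .Q2).trans (sandwich .Q2).symm,
    (S_gen .R).trans (DAHA.eSym_mul_R_mul_eSym ht ht2).symm⟩
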